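/- Let n ∈ {4,5}. In ℝ[x_1,…,x_n] define the homogeneous polynomials f_j = C(n,j)·x_1^{2j} − e_j(x_2²,…,x_n²) for 1 ≤ j ≤ n−1 (where C(n,j) is the binomial coefficient and e_j is taken in the n−1 listed arguments) and f_n = x_1^n. Then ω = 1·x_1 + 2·x_2 + ⋯ + n·x_n is a Hard Lefschetz element of A = ℝ[x_1,…,x_n]/(f_1,…,f_n) with socle degree N = n² − n. -/

import Mathlib

/-!
Write `I` for the ideal of relations, `A` for the quotient and `N = n² - n`, that is, `12` or `20`.

*Upper bound.* In terms of `y_i = x_i²` the relations prescribe the elementary symmetric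
polynomials of `y_2, …, y_n`. As for coinvariant algebras, a complete symmetric polynomial in
`y_2, …, y_k` is then a combination of terms with lower powers of `x_k`, so `A` is spanned by the
monomials with exponents in the box `[0, n) × [0, 2n-2) × ⋯ × [0, 4) × [0, 2)` (`reduction_four`,
`reduction_five`, `gradedPiece_eq_span`). The top degree of the box is `N`, which gives the
vanishing above `N`, and the complement in the box matches degrees `d` and `N - d`
(`card_expBox_symm`).

*Duality.* Let `φ` be the functional of degree `N` that antisymmetrizes in `y_2, …, y_n`, divides by
the Vandermonde determinant, and takes the coefficient of `x_1 ^ (n-1)`. It vanishes on `I`. All the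
pairings needed are contained in the single functional `ψ(q) = φ(q * exp ω)`, which again vanishes
on `I` (`functional_psi4_rel`, `functional_psi5_rel`). Euler's identity for the homogeneous `φ`
gives `ψ(ω q) = (N - deg q) ψ(q)`, hence `ψ(ω ^ (N - 2d) x y) = (N - 2d)! ψ(x y)` for `x`, `y` of
degree `d` (`functional_pow_mul`). So if the Gram matrix `(ψ(x y))` of the box monomials of degree
`d` is nonsingular, these monomials are linearly independent in `A` and `ω ^ (N - 2d)` is injective
on their span; counting dimensions, it is bijective (`isHardLefschetz_of_functional`).

*Gram matrices.* They are integral, and it is enough to see that they are nonsingular modulo 23.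
Here `ψ` is scaled by a power of `11!`, which makes its values integers and is a unit modulo 23.
For each `d` with `2d ≤ N`, nonsingularity is decided by a Gaussian elimination that is proved sound
(`nonsing_sound`) and evaluated in the kernel (`nonsing_four`, `nonsing_five`).
-/

open MvPolynomial Finset

noncomputable section

/-- The `j`-th elementary symmetric polynomial of the listed arguments `v 0, …, v (m-1)`. -/
def esymmOf {R : Type*} [CommRing R] {m : ℕ} (j : ℕ) (v : Fin m → R) : R :=
  ∑ s ∈ Finset.powersetCard j (Finset.univ : Finset (Fin m)), ∏ i ∈ s, v i

/-- The degree-`e` graded piece of `ℝ[x_1,…,x_r]/I`: the image in the quotient of the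
homogeneous polynomials of degree `e`. -/
def gradedPiece {r : ℕ} (I : Ideal (MvPolynomial (Fin r) ℝ)) (e : ℕ) :
    Submodule ℝ (MvPolynomial (Fin r) ℝ ⧸ I) :=
  (homogeneousSubmodule (Fin r) ℝ e).map (Ideal.Quotient.mkₐ ℝ I).toLinearMap

/-- `ω` is a Hard Lefschetz element of `ℝ[x_1,…,x_r]/I` with socle degree `N`:
all graded pieces above degree `N` vanish, and for `0 ≤ 2d ≤ N` multiplication by
`ω^(N-2d)` is a bijective linear map from the degree-`d` piece onto the degree-`(N-d)` piece. -/
def IsHardLefschetzElement {r : ℕ} (I : Ideal (MvPolynomial (Fin r) ℝ))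
    (ω : MvPolynomial (Fin r) ℝ ⧸ I) (N : ℕ) : Prop :=
  (∀ e, N < e → gradedPiece I e = ⊥) ∧
  ∀ d : ℕ, 2 * d ≤ N →
    (gradedPiece I d).map (LinearMap.mulLeft ℝ (ω ^ (N - 2 * d))) = gradedPiece I (N - d) ∧
    ∀ x ∈ gradedPiece I d, ω ^ (N - 2 * d) * x = 0 → x = 0

/-- The `n-1` listed arguments `(x_2², …, x_n²)` (variables are `X 0, …, X (n-1)` with
`x_i = X (i-1)`). -/
def sqArgs (n : ℕ) : Fin (n - 1) → MvPolynomial (Fin n) ℝ := fun i =>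
  (X (⟨i.val + 1, by have := i.isLt; omega⟩ : Fin n)) ^ 2

/-- The relations `f_j = C(n,j)·x_1^{2j} − e_j(x_2²,…,x_n²)` for `1 ≤ j ≤ n−1`,
and `f_n = x_1^n`. -/
def rel3 (n : ℕ) : Fin n → MvPolynomial (Fin n) ℝ := fun j =>
  if j.val + 1 = n then (X (⟨0, j.pos⟩ : Fin n)) ^ n
  else (n.choose (j.val + 1) : MvPolynomial (Fin n) ℝ)
      * (X (⟨0, j.pos⟩ : Fin n)) ^ (2 * (j.val + 1))
    - esymmOf (j.val + 1) (sqArgs n)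

/-- `ω = 1·x_1 + 2·x_2 + ⋯ + n·x_n`. -/
def omegaPoly (n : ℕ) : MvPolynomial (Fin n) ℝ :=
  ∑ i : Fin n, C ((i.val : ℝ) + 1) * X i

/-! ### Hard Lefschetz from a dual functional -/

/-- Exponents of degree `d` in the box `∏ [0, D i)`. -/
def expBox {n : ℕ} (D : Fin n → ℕ) (d : ℕ) : Finset (Fin n →₀ ℕ) :=
  (Finset.finsuppAntidiag univ d).filter (fun m => ∀ i, m i < D i)

lemma mem_expBox {n : ℕ} {D : Fin n → ℕ} {d : ℕ} {m : Fin n →₀ ℕ} :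
    m ∈ expBox D d ↔ ∑ i, m i = d ∧ ∀ i, m i < D i := by
  simp [expBox, Finset.mem_finsuppAntidiag]

/-- The complement `m ↦ D - 1 - m` exchanges the degrees `d` and `N - d` of the box. -/
lemma card_expBox_symm {n : ℕ} (D : Fin n → ℕ) {N d : ℕ} (hN : ∑ i, (D i - 1) = N)
    (hd : d ≤ N) : (expBox D d).card = (expBox D (N - d)).card := by
  have key : ∀ e, e ≤ N → ∀ m ∈ expBox D e,
      Finsupp.equivFunOnFinite.symm (fun i => D i - 1 - m i) ∈ expBox D (N - e) := by
    intro e he m hm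
    rw [mem_expBox] at hm ⊢
    obtain ⟨h1, h2⟩ := hm
    constructor
    · simp only [Finsupp.equivFunOnFinite_symm_apply_apply]
      have : ∑ i, (D i - 1 - m i) + ∑ i, m i = ∑ i, (D i - 1) := by
        rw [← Finset.sum_add_distrib]
        exact Finset.sum_congr rfl fun i _ => by have := h2 i; omega
      omega
    · intro i
      have := h2 i
      simp only [Finsupp.equivFunOnFinite_symm_apply_apply]
      omega
  have inv : ∀ e, ∀ m ∈ expBox D e, Finsupp.equivFunOnFinite.symm (fun i => D i - 1 -
      (Finsupp.equivFunOnFinite.symm (fun i => D i - 1 - m i) : Fin n →₀ ℕ) i) = m := by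
    intro e m hm
    rw [mem_expBox] at hm
    ext i
    have := hm.2 i
    simp only [Finsupp.equivFunOnFinite_symm_apply_apply]
    omega
  refine Finset.card_nbij' _ _ (key d hd) ?_ (fun m hm => inv d m hm)
    (fun m hm => inv (N - d) m hm)
  intro m hm
  have := key (N - d) (by omega) m hm
  rwa [Nat.sub_sub_self hd] at this

section Abstract

variable {n : ℕ} (I : Ideal (MvPolynomial (Fin n) ℝ)) (D : Fin n → ℕ)

/-- The span of the monomials of degree `e` with `∑ i, i * α i < w`. -/
def lowSpan (n : ℕ) (e w : ℕ) : Submodule ℝ (MvPolynomial (Fin n) ℝ) :=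
  Submodule.span ℝ {q | ∃ τ : Fin n →₀ ℕ, ∑ i, τ i = e ∧ ∑ i : Fin n, (i : ℕ) * τ i < w ∧
    q = monomial τ 1}

/-- Rewriting `X k ^ D k` by lower terms brings every monomial into the box, modulo `I`. -/
lemma monomial_mem_span
    (hred : ∀ k : Fin n, ∃ r ∈ lowSpan n (D k) (k * D k), X k ^ D k - r ∈ I) (α : Fin n →₀ ℕ) :
    Ideal.Quotient.mk I (monomial α 1) ∈
      Submodule.span ℝ ((fun m => Ideal.Quotient.mk I (monomial m (1 : ℝ))) ''
        (expBox D (∑ i, α i) : Set (Fin n →₀ ℕ))) := by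
  induction hw : ∑ i : Fin n, (i : ℕ) * α i using Nat.strong_induction_on generalizing α with
  | _ w ih =>
  by_cases hα : ∀ i, α i < D i
  · exact Submodule.subset_span ⟨α, mem_expBox.2 ⟨rfl, hα⟩, rfl⟩
  push Not at hα
  obtain ⟨k, hk⟩ := hα
  obtain ⟨r, hr, hrI⟩ := hred k
  set α' := α - Finsupp.single k (D k) with hα'
  have hsplit : α' + Finsupp.single k (D k) = α :=
    tsub_add_cancel_of_le (Finsupp.single_le_iff.2 hk)
  have hdeg : ∑ i, α i = ∑ i, α' i + D k := by
    rw [← hsplit]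
    simp [Finset.sum_add_distrib]
  have hwt : ∑ i : Fin n, (i : ℕ) * α i = ∑ i : Fin n, (i : ℕ) * α' i + k * D k := by
    rw [← hsplit]
    simp [mul_add, Finset.sum_add_distrib, Finsupp.single_apply]
  have hmk : Ideal.Quotient.mk I (monomial α 1) = Ideal.Quotient.mk I (r * monomial α' 1) := by
    rw [Ideal.Quotient.eq, ← hsplit]
    have : monomial (α' + Finsupp.single k (D k)) (1 : ℝ) = X k ^ D k * monomial α' 1 := by
      rw [X_pow_eq_monomial, monomial_mul, add_comm]; simp
    rw [this, ← sub_mul]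
    exact I.mul_mem_right _ hrI
  rw [hmk]
  clear hrI hmk
  unfold lowSpan at hr
  induction hr using Submodule.span_induction with
  | mem q hq =>
    obtain ⟨τ, h1, h2, rfl⟩ := hq
    rw [monomial_mul, one_mul]
    have e1 : ∑ i, (τ + α') i = ∑ i, α i := by
      simp [Finset.sum_add_distrib]; omega
    have e2 : ∑ i : Fin n, (i : ℕ) * (τ + α') i < w := by
      simp [mul_add, Finset.sum_add_distrib]; omega
    have := ih _ e2 (τ + α') rfl
    rwa [e1] at this
  | zero => simp
  | add x y _ _ hx hy =>
    rw [add_mul, map_add]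
    exact Submodule.add_mem _ hx hy
  | smul a x _ hx =>
    have : Ideal.Quotient.mk I (a • x * monomial α' 1)
        = a • Ideal.Quotient.mk I (x * monomial α' 1) := by
      rw [smul_mul_assoc]; rfl
    rw [this]
    exact Submodule.smul_mem _ _ hx

lemma gradedPiece_eq_span
    (hred : ∀ k : Fin n, ∃ r ∈ lowSpan n (D k) (k * D k), X k ^ D k - r ∈ I) (e : ℕ) :
    gradedPiece I e = Submodule.span ℝ (Set.range
      (fun m : expBox D e => Ideal.Quotient.mk I (monomial (m : Fin n →₀ ℕ) (1 : ℝ)))) := by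
  have hset : Set.range (fun m : expBox D e => Ideal.Quotient.mk I (monomial (m : Fin n →₀ ℕ) (1 : ℝ)))
      = (fun m => Ideal.Quotient.mk I (monomial m (1 : ℝ))) '' (expBox D e : Set (Fin n →₀ ℕ)) := by
    ext x; simp
  apply le_antisymm
  · rintro _ ⟨p, hp, rfl⟩
    rw [p.as_sum, map_sum]
    refine Submodule.sum_mem _ fun α hα => ?_
    have h1 : ∑ i, α i = e := by
      have := (mem_homogeneousSubmodule _ _).1 hp (mem_support_iff.1 hα)
      rw [← this, Finsupp.weight_apply, Finsupp.sum_fintype _ _ (by simp)]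
      simp
    have h2 : (Ideal.Quotient.mkₐ ℝ I).toLinearMap (monomial α (coeff α p))
        = coeff α p • Ideal.Quotient.mk I (monomial α 1) := by
      rw [← mul_one (coeff α p), ← smul_eq_mul, ← smul_monomial, map_smul]
      simp
    rw [h2]
    apply Submodule.smul_mem
    have := monomial_mem_span I D hred α
    rwa [h1, ← hset] at this
  · rw [Submodule.span_le]
    rintro _ ⟨m, rfl⟩
    refine ⟨monomial m 1, ?_, rfl⟩
    have := (mem_expBox.1 m.2).1
    refine (mem_homogeneousSubmodule _ _).2 (isHomogeneous_monomial _ ?_)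
    rw [Finsupp.degree_eq_sum]; exact this

/-- The linear functional on polynomials with prescribed integer values on monomials. -/
def functional (ψ : (Fin n →₀ ℕ) → ℤ) : MvPolynomial (Fin n) ℝ →ₗ[ℝ] ℝ :=
  (basisMonomials (Fin n) ℝ).constr ℝ (fun α => (ψ α : ℝ))

lemma functional_monomial (ψ : (Fin n →₀ ℕ) → ℤ) (α : Fin n →₀ ℕ) (c : ℝ) :
    functional ψ (monomial α c) = c * ψ α := by
  have : monomial α c = c • basisMonomials (Fin n) ℝ α := by
    simp [smul_monomial]
  rw [this, map_smul, functional, Module.Basis.constr_basis, smul_eq_mul]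

/-- Transport of nonsingularity from `ZMod p` to `ℝ` for a square integer matrix. -/
lemma real_kernel_of_zmod {ι : Type*} [Fintype ι] [DecidableEq ι] (p : ℕ) [Fact p.Prime]
    (G : Matrix ι ι ℤ)
    (h : ∀ c : ι → ZMod p, (∀ i, ∑ j, c j * (G i j : ZMod p) = 0) → c = 0)
    (c : ι → ℝ) (hc : ∀ i, ∑ j, c j * (G i j : ℝ) = 0) : c = 0 := by
  have hp : (G.map (Int.castRingHom (ZMod p))).det ≠ 0 := by
    intro h0
    obtain ⟨v, hv, hv'⟩ := Matrix.exists_mulVec_eq_zero_iff.2 h0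
    apply hv
    apply h
    intro i
    have := congrFun hv' i
    simpa [Matrix.mulVec, dotProduct, mul_comm] using this
  have hZ : G.det ≠ 0 := by
    intro h0
    apply hp
    have := (Int.castRingHom (ZMod p)).map_det G
    rw [h0, map_zero] at this
    exact this.symm
  have hR : (G.map (Int.castRingHom ℝ)).det ≠ 0 := by
    have := (Int.castRingHom ℝ).map_det G
    intro h0
    apply hZ
    have h2 : (Int.castRingHom ℝ) G.det = 0 := this.trans h0
    simpa using h2
  apply Matrix.eq_zero_of_mulVec_eq_zero hR
  ext i
  simpa [Matrix.mulVec, dotProduct, mul_comm] using hc i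

variable (w : Fin n → ℝ) (N : ℕ) (ψ : (Fin n →₀ ℕ) → ℤ)

/-- Euler's identity `hE` says that multiplication by `ω = ∑ i, w i * x_i` scales the functional
by `N - e` in degree `e`. This holds for `q ↦ φ (q * exp ω)` with `φ` of degree `N`. -/
lemma functional_linear_mul
    (hE : ∀ β : Fin n →₀ ℕ, ∑ i, w i * (ψ (Finsupp.single i 1 + β) : ℝ)
      = ((N : ℝ) - ∑ i, (β i : ℝ)) * ψ β)
    {e : ℕ} (q : MvPolynomial (Fin n) ℝ) (hq : q.IsHomogeneous e) :
    functional ψ ((∑ i, C (w i) * X i) * q) = ((N : ℝ) - e) * functional ψ q := by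
  conv_lhs => rw [q.as_sum]
  conv_rhs => rw [q.as_sum]
  rw [Finset.mul_sum, map_sum, map_sum, Finset.mul_sum]
  refine Finset.sum_congr rfl fun α hα => ?_
  have h1 : ∑ i, α i = e := by
    have := hq (mem_support_iff.1 hα)
    rw [← this, Finsupp.weight_apply, Finsupp.sum_fintype _ _ (by simp)]
    simp
  rw [functional_monomial, Finset.sum_mul, map_sum]
  have : ∀ i, functional ψ (C (w i) * X i * monomial α (coeff α q))
      = coeff α q * (w i * (ψ (Finsupp.single i 1 + α) : ℝ)) := by
    intro i
    rw [C_mul_X_eq_monomial, monomial_mul, functional_monomial]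
    ring
  simp only [this]
  rw [← Finset.mul_sum, hE]
  have h2 : (∑ i, (α i : ℝ)) = e := by rw [← h1]; push_cast; rfl
  rw [h2]; ring

lemma functional_pow_mul
    (hE : ∀ β : Fin n →₀ ℕ, ∑ i, w i * (ψ (Finsupp.single i 1 + β) : ℝ)
      = ((N : ℝ) - ∑ i, (β i : ℝ)) * ψ β)
    (k : ℕ) : ∀ {e : ℕ} (q : MvPolynomial (Fin n) ℝ), q.IsHomogeneous e → e + k = N →
    functional ψ ((∑ i, C (w i) * X i) ^ k * q) = (k.factorial : ℝ) * functional ψ q := by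
  induction k with
  | zero => intro e q _ _; simp
  | succ k ih =>
    intro e q hq he
    have hω : (∑ i, C (w i) * X i : MvPolynomial (Fin n) ℝ).IsHomogeneous 1 := by
      refine IsHomogeneous.sum _ _ _ fun i _ => ?_
      simpa using (isHomogeneous_C (Fin n) (w i)).mul (isHomogeneous_X ℝ i)
    rw [pow_succ, mul_assoc, ih _ (hω.mul hq) (by omega), functional_linear_mul w N ψ hE q hq,
      Nat.factorial_succ]
    have : (N : ℝ) = e + (k + 1) := by rw [← he]; push_cast; ring
    rw [this]; push_cast; ring

/-- Criterion for the Hard Lefschetz property: every monomial reduces to the box `∏ [0, D i)`,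
`ψ` defines a functional that vanishes on `I` and satisfies Euler's identity for
`ω = ∑ i, w i * x_i`, and the Gram matrices `(ψ (β + m))` of the box monomials of degree `d` are
nonsingular modulo `p`. -/
theorem isHardLefschetz_of_functional (p : ℕ) [Fact p.Prime]
    (hN : ∑ i, (D i - 1) = N)
    (hred : ∀ k : Fin n, ∃ r ∈ lowSpan n (D k) (k * D k), X k ^ D k - r ∈ I)
    (hI : ∀ q ∈ I, functional ψ q = 0)
    (hE : ∀ β : Fin n →₀ ℕ, ∑ i, w i * (ψ (Finsupp.single i 1 + β) : ℝ)
      = ((N : ℝ) - ∑ i, (β i : ℝ)) * ψ β)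
    (hG : ∀ d, 2 * d ≤ N → ∀ c : (Fin n →₀ ℕ) → ZMod p,
      (∀ β ∈ expBox D d, ∑ m ∈ expBox D d, c m * (ψ (β + m) : ZMod p) = 0) →
      ∀ m ∈ expBox D d, c m = 0) :
    IsHardLefschetzElement I (Ideal.Quotient.mk I (∑ i, C (w i) * X i)) N := by
  classical
  refine ⟨fun e he => ?_, fun d hd => ?_⟩
  · rw [gradedPiece_eq_span I D hred, Submodule.span_eq_bot]
    rintro _ ⟨⟨m, hm⟩, rfl⟩
    rw [mem_expBox] at hm
    have : ∑ i, m i ≤ ∑ i, (D i - 1) :=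
      Finset.sum_le_sum fun i _ => by have := hm.2 i; omega
    omega
  set ω : MvPolynomial (Fin n) ℝ := ∑ i, C (w i) * X i with hω
  set k := N - 2 * d with hk
  set b : expBox D d → MvPolynomial (Fin n) ℝ ⧸ I :=
    fun m => Ideal.Quotient.mk I (monomial (m : Fin n →₀ ℕ) (1 : ℝ)) with hb
  have hGR : ∀ c : expBox D d → ℝ,
      (∀ β : expBox D d, ∑ m : expBox D d, c m * (ψ ((β : Fin n →₀ ℕ) + m) : ℝ) = 0) → c = 0 := by
    intro c hc
    refine real_kernel_of_zmod p (fun β m : expBox D d => ψ ((β : Fin n →₀ ℕ) + m)) ?_ c hc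
    intro c' hc'
    have := hG d hd (fun m => if h : m ∈ expBox D d then c' ⟨m, h⟩ else 0) ?_
    · ext ⟨m, hm⟩
      have := this m hm
      rwa [dif_pos hm] at this
    · intro β hβ
      rw [← Finset.sum_coe_sort, ← hc' ⟨β, hβ⟩]
      exact Finset.sum_congr rfl fun m _ => by rw [dif_pos m.2]
  -- the Gram matrix of `(x, y) ↦ φ(ω ^ k x y)` detects combinations of box monomials
  have main : ∀ c : expBox D d → ℝ,
      Ideal.Quotient.mk I ω ^ k * ∑ m, c m • b m = 0 → c = 0 := by
    intro c hc
    apply hGR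
    intro β
    set P : MvPolynomial (Fin n) ℝ := ∑ m : expBox D d, monomial (m : Fin n →₀ ℕ) (c m) with hP
    have hPb : Ideal.Quotient.mk I P = ∑ m, c m • b m := by
      rw [hP, map_sum]
      refine Finset.sum_congr rfl fun m _ => ?_
      have : monomial (m : Fin n →₀ ℕ) (c m) = c m • monomial (m : Fin n →₀ ℕ) (1 : ℝ) := by
        simp [smul_monomial]
      rw [this]; rfl
    have hdeg : ∀ m : expBox D d, Finsupp.degree (m : Fin n →₀ ℕ) = d := fun m => by
      rw [Finsupp.degree_eq_sum]; exact (mem_expBox.1 m.2).1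
    have hPh : (P * monomial (β : Fin n →₀ ℕ) 1).IsHomogeneous (d + d) := by
      refine IsHomogeneous.mul ?_ (isHomogeneous_monomial _ (hdeg β))
      exact IsHomogeneous.sum _ _ _ fun m _ => isHomogeneous_monomial _ (hdeg m)
    have hmem : ω ^ k * (P * monomial (β : Fin n →₀ ℕ) 1) ∈ I := by
      rw [← mul_assoc]
      refine I.mul_mem_right _ ?_
      rw [← Ideal.Quotient.eq_zero_iff_mem, map_mul, map_pow, hPb, hc]
    have h0 := hI _ hmem
    rw [functional_pow_mul w N ψ hE k _ hPh (by omega)] at h0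
    have h1 := (mul_eq_zero.1 h0).resolve_left (by exact_mod_cast k.factorial_ne_zero)
    rw [← h1, hP, Finset.sum_mul, map_sum]
    refine Finset.sum_congr rfl fun m _ => ?_
    rw [monomial_mul, functional_monomial, mul_one, add_comm (m : Fin n →₀ ℕ)]
  have hspan : ∀ x ∈ gradedPiece I d, ∃ c : expBox D d → ℝ, ∑ m, c m • b m = x := by
    intro x hx
    rw [gradedPiece_eq_span I D hred] at hx
    exact (Submodule.mem_span_range_iff_exists_fun ℝ).1 hx
  have hinj : ∀ x ∈ gradedPiece I d, Ideal.Quotient.mk I ω ^ k * x = 0 → x = 0 := by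
    intro x hx h0
    obtain ⟨c, rfl⟩ := hspan x hx
    rw [main c h0]; simp
  refine ⟨?_, hinj⟩
  have hli : LinearIndependent ℝ b := by
    rw [Fintype.linearIndependent_iff]
    intro c hc i
    rw [main c (by rw [hc, mul_zero])]; rfl
  have hfd : ∀ e, FiniteDimensional ℝ (gradedPiece I e) := by
    intro e
    rw [gradedPiece_eq_span I D hred]
    exact FiniteDimensional.span_of_finite ℝ (Set.finite_range _)
  have := hfd d
  have := hfd (N - d)
  set f := (LinearMap.mulLeft ℝ (Ideal.Quotient.mk I ω ^ k)).domRestrict (gradedPiece I d) with hf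
  have hrange : LinearMap.range f
      = (gradedPiece I d).map (LinearMap.mulLeft ℝ (Ideal.Quotient.mk I ω ^ k)) := by
    rw [hf, LinearMap.range_domRestrict]
  have hfinj : Function.Injective f := by
    rw [← LinearMap.ker_eq_bot, LinearMap.ker_eq_bot']
    rintro ⟨x, hx⟩ h0
    exact Subtype.ext (hinj x hx h0)
  apply Submodule.eq_of_le_of_finrank_le
  · rintro _ ⟨_, ⟨q, hq, rfl⟩, rfl⟩
    refine ⟨ω ^ k * q, ?_, by simp⟩
    have hωh : ω.IsHomogeneous 1 := by
      refine IsHomogeneous.sum _ _ _ fun i _ => ?_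
      simpa using (isHomogeneous_C (Fin n) (w i)).mul (isHomogeneous_X ℝ i)
    have := (hωh.pow k).mul ((mem_homogeneousSubmodule _ _).1 hq)
    rw [show 1 * k + d = N - d by omega] at this
    exact (mem_homogeneousSubmodule _ _).2 this
  · rw [← hrange, LinearMap.finrank_range_of_inj hfinj, gradedPiece_eq_span I D hred d,
      finrank_span_eq_card hli, gradedPiece_eq_span I D hred (N - d), Fintype.card_coe,
      card_expBox_symm D hN (by omega), ← Fintype.card_coe]
    exact finrank_range_le_card _

end Abstract

/-! ### A verified elimination modulo 23

The functions here are evaluated by the kernel. They are written with `Nat.rec`, `List.rec` and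
the binary operations on `Nat` that the kernel computes on numerals. Rows of a matrix are
packed into single numerals, so that one row operation is one multiplication and one addition. -/

/-- `f n`, with a case split on `n`: the kernel evaluates `n` to a numeral before entering `f`. -/
def force {α : Type} (n : ℕ) (f : ℕ → α) : α := Nat.rec (f 0) (fun k _ => f (Nat.succ k)) n

lemma force_eq {α : Type} (n : ℕ) (f : ℕ → α) : force n f = f n := by
  cases n <;> rfl

/-- `acc * b ^ k + ∑ i < k, f i * b ^ i`. -/
def pack (b : ℕ) (f : ℕ → ℕ) (k : ℕ) : ℕ → ℕ :=
  Nat.rec (fun acc => acc) (fun k ih acc => force (Nat.add (Nat.mul acc b) (f k)) ih) k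

/-- The table `∑ c < m * k, f c * 256 ^ c`, computed in `m` blocks of length `k`. -/
def table (f : ℕ → ℕ) (m k : ℕ) : ℕ :=
  pack (Nat.pow 256 k) (fun j => pack 256 (fun i => f (Nat.add (Nat.mul j k) i)) k 0) m 0

/-- The entry at position `c` of a table. -/
def entryAt (T c : ℕ) : ℕ := Nat.mod (Nat.div T (Nat.pow 256 c)) 256

/-- Passes to `K` the list of the `code i`, for the `i < k` with `P i`, followed by `acc`. -/
def gather (P : ℕ → Bool) (code : ℕ → ℕ) (K : List ℕ → Bool) (k : ℕ) : List ℕ → Bool :=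
  Nat.rec K (fun k ih acc => cond (P k) (force (code k) (fun c => ih (c :: acc))) (ih acc)) k

/-- The row `(entryAt T (c + m))` for `m` in `l`, as digits in base `2 ^ 18`. -/
def packRow (T c : ℕ) (l : List ℕ) : ℕ :=
  List.rec 0 (fun m _ ih => Nat.add (entryAt T (Nat.add c m)) (Nat.mul 262144 ih)) l

/-- A row together with a checksum in its low 64 bits. The checksum carries no information; it
keeps the hash values of distinct rows apart, since the kernel hashes numerals by their low word. -/
def tag (v : ℕ) : ℕ :=
  Nat.add (Nat.mul v 18446744073709551616) (Nat.succ (Nat.mod v 9823475982374598237))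

/-- The row in a tagged row. -/
def untag (N : ℕ) : ℕ := Nat.div N 18446744073709551616

/-- The tagged rows `packRow T c L` for `c` in `l`, on top of `acc`. -/
def packRows (T : ℕ) (L : List ℕ) (l : List ℕ) : List ℕ → List ℕ :=
  List.rec (fun acc => acc)
    (fun c _ ih acc => force (tag (packRow T c L)) (fun v => ih (v :: acc))) l

/-- The residue modulo 23 of the first digit of a tagged row. -/
def lead (N : ℕ) : ℕ := Nat.mod (Nat.mod (untag N) 262144) 23

/-- The row `N` of length `k` multiplied by `s`, with digits reduced modulo 23. -/
def scaleRow (s N k : ℕ) : ℕ :=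
  Nat.rec 0 (fun k ih =>
    Nat.add ih (Nat.mul
      (Nat.mod (Nat.mul (Nat.mod (Nat.div N (Nat.pow 262144 k)) 262144) s) 23)
      (Nat.pow 262144 k))) k

/-- Adds to each row the multiple of the pivot row `P` that kills its first entry, and drops
that entry. -/
def stepRows (P : ℕ) (l : List ℕ) : List ℕ → List ℕ :=
  List.rec (fun acc => acc) (fun N _ ih acc =>
    force (tag (Nat.div (Nat.add (untag N) (Nat.mul (lead N) P)) 262144))
      (fun v => ih (v :: acc))) l

/-- Looks in `rows` for a row with nonzero first entry, scales this entry to `22 = -1`, clears the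
first column with it and continues with `ih`. -/
def pivot (k : ℕ) (ih : List ℕ → Bool) (rows : List ℕ) : List ℕ → Bool :=
  List.rec (motive := fun _ => List ℕ → Bool) (fun _ => false) (fun N l ihl acc =>
    Nat.rec (ihl (N :: acc)) (fun e _ =>
      force (scaleRow (Nat.mod (Nat.mul 22 (Nat.pow (Nat.succ e) 21)) 23) (untag N) (Nat.succ k))
        (fun P => cond (Nat.beq (Nat.mod P 262144) 22)
          (ih (stepRows P l (stepRows P acc []))) false)) (lead N)) rows

/-- Whether Gaussian elimination finds pivots in all of the `k` columns. -/
def elim (k : ℕ) : List ℕ → Bool :=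
  Nat.rec (fun _ => true) (fun k ih rows => pivot k ih rows []) k

/-- Whether the matrix with entries `f (c + c')`, for `c` and `c'` in the gathered list of codes, is
found to be nonsingular modulo 23. -/
def nonsing (f : ℕ → ℕ) (m k : ℕ) (P : ℕ → Bool) (code : ℕ → ℕ) (r : ℕ) : Bool :=
  force (table f m k) (fun T =>
    gather P code (fun L => force (List.length L) (fun h => elim h (packRows T L L []))) r [])

/-- `N` has base-`2 ^ 18` digits at most `b`, whose combination with coefficients `cs`
is `s`. -/
def IsRow : List (ZMod 23) → ℕ → ℕ → ZMod 23 → Prop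
  | [], _, N, s => N = 0 ∧ s = 0
  | c :: cs, b, N, s => ∃ r N' s', r ≤ b ∧ N = r + 262144 * N' ∧ IsRow cs b N' s' ∧
      s = r * c + s'

lemma IsRow.add_mul {b b' : ℕ} (e : ℕ) : ∀ {cs : List (ZMod 23)} {N N' : ℕ} {s s' : ZMod 23},
    IsRow cs b N s → IsRow cs b' N' s' → IsRow cs (b + e * b') (N + e * N') (s + e * s')
  | [], _, _, _, _, ⟨h1, h2⟩, ⟨h3, h4⟩ => by subst_vars; exact ⟨by simp, by simp⟩
  | _ :: cs, _, _, _, _, ⟨r, M, t, hr, h1, h2, h3⟩, ⟨r', M', t', hr', h1', h2', h3'⟩ => by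
    refine ⟨r + e * r', M + e * M', t + e * t', ?_, ?_, h2.add_mul e h2', ?_⟩
    · gcongr
    · subst_vars; ring
    · subst_vars; push_cast; ring

lemma IsRow.mono {b b' : ℕ} (hb : b ≤ b') : ∀ {cs : List (ZMod 23)} {N : ℕ} {s : ZMod 23},
    IsRow cs b N s → IsRow cs b' N s
  | [], _, _, h => h
  | _ :: _, _, _, ⟨r, M, t, hr, h1, h2, h3⟩ => ⟨r, M, t, hr.trans hb, h1, h2.mono hb, h3⟩

lemma IsRow.eq_zero {b : ℕ} : ∀ {cs : List (ZMod 23)} {N : ℕ} {s : ZMod 23},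
    IsRow cs b N s → (∀ c ∈ cs, c = 0) → s = 0
  | [], _, _, h, _ => h.2
  | c :: cs, _, _, ⟨r, M, t, _, _, h2, h3⟩, h => by
    rw [h3, h c (by simp), h2.eq_zero (fun c hc => h c (by simp [hc]))]; simp

lemma scaleRow_succ (s N k : ℕ) : scaleRow s N (k + 1) =
    (N % 262144 * s % 23) + 262144 * scaleRow s (N / 262144) k := by
  induction k with
  | zero =>
    change 0 + (N / 262144 ^ 0 % 262144 * s % 23) * 262144 ^ 0 = _ + 262144 * 0
    simp
  | succ k ih =>
    change scaleRow s N (k + 1) + (N / 262144 ^ (k + 1) % 262144 * s % 23) * 262144 ^ (k + 1) =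
      _ + 262144 * (scaleRow s (N / 262144) k +
        (N / 262144 / 262144 ^ k % 262144 * s % 23) * 262144 ^ k)
    rw [ih, Nat.div_div_eq_div_mul, ← pow_succ']
    ring

lemma IsRow.scaleRow {b : ℕ} (hb : b < 262144) (t : ℕ) :
    ∀ {cs : List (ZMod 23)} {N : ℕ} {s : ZMod 23},
    IsRow cs b N s → IsRow cs 22 (scaleRow t N cs.length) (t * s)
  | [], _, _, ⟨h1, h2⟩ => ⟨rfl, by simp [h2]⟩
  | c :: cs, N, s, ⟨r, M, u, hr, h1, h2, h3⟩ => by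
    have e1 : N % 262144 = r := by omega
    have e2 : N / 262144 = M := by omega
    refine ⟨r * t % 23, _, _, by omega, ?_, h2.scaleRow hb t, ?_⟩
    · rw [List.length_cons, scaleRow_succ, e1, e2]
    · rw [h3, ZMod.natCast_mod]; push_cast; ring

lemma untag_tag (v : ℕ) : untag (tag v) = v := by
  change (v * 18446744073709551616 + (v % 9823475982374598237 + 1)) / 18446744073709551616 = v
  omega

lemma mem_stepRows (P : ℕ) (l : List ℕ) : ∀ acc, ∀ y ∈ stepRows P l acc, y ∈ acc ∨
    ∃ N ∈ l, y = tag ((untag N + lead N * P) / 262144) := by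
  induction l with
  | nil => intro acc y hy; exact Or.inl hy
  | cons N l ih =>
    intro acc y hy
    change y ∈ force (tag ((untag N + lead N * P) / 262144)) (fun v => stepRows P l (v :: acc)) at hy
    rw [force_eq] at hy
    rcases ih _ y hy with h | ⟨M, hM, rfl⟩
    · rcases List.mem_cons.1 h with rfl | h
      · exact Or.inr ⟨N, by simp, rfl⟩
      · exact Or.inl h
    · exact Or.inr ⟨M, by simp [hM], rfl⟩

lemma pivot_cons (k : ℕ) (ih : List ℕ → Bool) (N : ℕ) (l acc : List ℕ) :
    pivot k ih (N :: l) acc = Nat.rec (motive := fun _ => Bool) (pivot k ih l (N :: acc))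
      (fun e _ => force (scaleRow (Nat.mod (Nat.mul 22 (Nat.pow (Nat.succ e) 21)) 23)
        (untag N) (Nat.succ k)) (fun P => cond (Nat.beq (Nat.mod P 262144) 22)
          (ih (stepRows P l (stepRows P acc []))) false)) (lead N) := rfl

lemma pivot_sound {k : ℕ} {ih : List ℕ → Bool} (rows : List ℕ) : ∀ acc,
    pivot k ih rows acc = true → ∃ N ∈ rows ++ acc, ∃ l acc' t P,
      (∀ x ∈ l ++ acc', x ∈ rows ++ acc) ∧ P = scaleRow t (untag N) (k + 1) ∧
      P % 262144 = 22 ∧ ih (stepRows P l (stepRows P acc' [])) = true := by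
  induction rows with
  | nil => intro acc h; exact absurd h Bool.false_ne_true
  | cons N l ihl =>
    intro acc h
    rw [pivot_cons] at h
    generalize lead N = e at h
    cases e with
    | zero =>
      obtain ⟨M, hM, l', acc', t, P, h1, h2⟩ := ihl _ h
      refine ⟨M, ?_, l', acc', t, P, fun x hx => ?_, h2⟩
      · simp only [List.mem_append, List.mem_cons] at hM ⊢; tauto
      · have := h1 x hx
        simp only [List.mem_append, List.mem_cons] at this ⊢; tauto
    | succ e =>
      simp only [force_eq] at h
      refine ⟨N, by simp, l, acc, 22 * (e + 1) ^ 21 % 23, _, fun x hx => ?_, rfl, ?_⟩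
      · simp only [List.mem_append, List.mem_cons] at hx ⊢; tauto
      · rw [Bool.cond_eq_ite] at h
        split_ifs at h with h0
        exact ⟨Nat.eq_of_beq_eq_true h0, h⟩

/-- Successful elimination forces a vector killed by all rows to vanish. Each step enlarges the
digits by at most `22 * 22`, so no carries occur. -/
lemma elim_sound : ∀ (cs : List (ZMod 23)) (b : ℕ) (rows : List ℕ),
    b + cs.length * 484 < 262144 → (∀ N ∈ rows, IsRow cs b (untag N) 0) →
    elim cs.length rows = true → ∀ c ∈ cs, c = 0 := by
  intro cs
  induction cs with
  | nil => simp
  | cons c cs ih =>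
    intro b rows hb hrows h
    rw [List.length_cons] at hb
    obtain ⟨N, hN, l, acc, t, P, hmem, rfl, hP, hel⟩ := pivot_sound rows [] h
    rw [List.append_nil] at hN hmem
    have hrep := (hrows N hN).scaleRow (by omega) t
    rw [List.length_cons] at hrep
    generalize scaleRow t (untag N) (cs.length + 1) = P at hP hel hrep
    obtain ⟨p, P', s', hp, hP1, hP2, hP3⟩ := hrep
    have hp22 : p = 22 := by omega
    subst hp22
    -- the rows after the step are combinations of rows of the same kind, one column shorter
    have key : ∀ M ∈ rows, IsRow cs (b + 484) ((untag M + lead M * P) / 262144) 0 := by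
      intro M hM
      obtain ⟨r, M', u, hr, h1, h2, h3⟩ := hrows M hM
      have hlead : lead M = r % 23 := by
        change untag M % 262144 % 23 = _
        rw [h1]; omega
      have hle : lead M ≤ 22 := by omega
      have h23 : ((lead M : ℕ) : ZMod 23) = r := by rw [hlead, ZMod.natCast_mod]
      have hq : (untag M + lead M * P) / 262144 = M' + lead M * P' := by
        rw [h1, hP1]
        have : r + 262144 * M' + lead M * (22 + 262144 * P') =
          (r + lead M * 22) + 262144 * (M' + lead M * P') := by ring
        rw [this]; omega
      rw [hq]
      have h22 : (22 : ZMod 23) = -1 := by decide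
      have hz : (0 : ZMod 23) = u + lead M * s' := by
        rw [mul_zero] at hP3
        push_cast at hP3
        rw [h22] at hP3
        rw [h23]
        linear_combination h3 + (r : ZMod 23) * hP3
      have := h2.add_mul (lead M) hP2
      rw [← hz] at this
      exact this.mono (by nlinarith)
    have hcs := ih (b + 484) _ (by omega) ?_ hel
    · have hs' := hP2.eq_zero hcs
      rw [hs', mul_zero, add_zero] at hP3
      intro x hx
      rcases List.mem_cons.1 hx with rfl | hx
      · have h22 : (22 : ZMod 23) = -1 := by decide
        push_cast at hP3
        rw [h22] at hP3
        linear_combination hP3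
      · exact hcs x hx
    · intro y hy
      rcases mem_stepRows _ _ _ y hy with hy | ⟨M, hM, rfl⟩
      · rcases mem_stepRows _ _ _ y hy with hy | ⟨M, hM, rfl⟩
        · simp at hy
        · rw [untag_tag]; exact key M (hmem M (by simp [hM]))
      · rw [untag_tag]; exact key M (hmem M (by simp [hM]))

lemma pack_eq (b : ℕ) (f : ℕ → ℕ) (k : ℕ) : ∀ acc,
    pack b f k acc = acc * b ^ k + ∑ i ∈ range k, f i * b ^ i := by
  induction k with
  | zero => intro acc; simp [pack]
  | succ k ih =>
    intro acc
    change force (acc * b + f k) (pack b f k) = _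
    rw [force_eq, ih, Finset.sum_range_succ]
    ring

lemma table_eq (f : ℕ → ℕ) (m k : ℕ) : table f m k = ∑ c ∈ range (m * k), f c * 256 ^ c := by
  change pack (256 ^ k) (fun j => pack 256 (fun i => f (j * k + i)) k 0) m 0 = _
  rw [pack_eq, zero_mul, zero_add]
  induction m with
  | zero => simp
  | succ m ih =>
    rw [Finset.sum_range_succ, ih, add_mul, one_mul, Finset.sum_range_add, pack_eq]
    simp only [zero_mul, zero_add, Finset.sum_mul]
    congr 1
    refine Finset.sum_congr rfl fun i _ => ?_
    rw [pow_add, pow_mul']; ring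

lemma digit_sum {b : ℕ} (f : ℕ → ℕ) (hf : ∀ c, f c < b) (n : ℕ) : ∀ c < n,
    (∑ i ∈ range n, f i * b ^ i) / b ^ c % b = f c := by
  have hb : 0 < b := (Nat.zero_le _).trans_lt (hf 0)
  induction n generalizing f with
  | zero => simp
  | succ n ih =>
    intro c hc
    have h0 : ∑ i ∈ range (n + 1), f i * b ^ i =
        f 0 + b * ∑ i ∈ range n, f (i + 1) * b ^ i := by
      rw [Finset.sum_range_succ', Finset.mul_sum, add_comm]
      congr 1
      · simp
      · exact Finset.sum_congr rfl fun i _ => by ring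
    rw [h0]
    cases c with
    | zero => simp [Nat.mod_eq_of_lt (hf 0)]
    | succ c =>
      rw [pow_succ', ← Nat.div_div_eq_div_mul, Nat.add_mul_div_left _ _ hb,
        Nat.div_eq_of_lt (hf 0), zero_add]
      exact ih (fun i => f (i + 1)) (fun c => hf _) c (by omega)

lemma entryAt_table {f : ℕ → ℕ} (hf : ∀ c, f c < 256) {m k c : ℕ} (hc : c < m * k) :
    entryAt (table f m k) c = f c := by
  rw [table_eq]
  exact digit_sum f hf _ c hc

lemma gather_eq (P : ℕ → Bool) (code : ℕ → ℕ) (K : List ℕ → Bool) (k : ℕ) : ∀ acc,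
    gather P code K k acc = K (((List.range k).filter P).map code ++ acc) := by
  induction k with
  | zero => intro acc; rfl
  | succ k ih =>
    intro acc
    change cond (P k) (force (code k) (fun c => gather P code K k (c :: acc)))
      (gather P code K k acc) = _
    rw [force_eq, ih, ih, List.range_succ, List.filter_append, List.map_append]
    cases h : P k <;> simp [h]

lemma mem_packRows (T : ℕ) (L l : List ℕ) : ∀ acc, ∀ y ∈ packRows T L l acc, y ∈ acc ∨
    ∃ c ∈ l, y = tag (packRow T c L) := by
  induction l with
  | nil => intro acc y hy; exact Or.inl hy
  | cons c l ih =>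
    intro acc y hy
    change y ∈ force (tag (packRow T c L)) (fun v => packRows T L l (v :: acc)) at hy
    rw [force_eq] at hy
    rcases ih _ y hy with h | ⟨M, hM, rfl⟩
    · rcases List.mem_cons.1 h with rfl | h
      · exact Or.inr ⟨c, by simp, rfl⟩
      · exact Or.inl h
    · exact Or.inr ⟨M, by simp [hM], rfl⟩

lemma rep_packRow (T c : ℕ) (code : ℕ → ℕ) (v : ℕ → ZMod 23) (I : List ℕ) :
    IsRow (I.map v) 255 (packRow T c (I.map code))
      (I.map (fun i => (entryAt T (c + code i) : ZMod 23) * v i)).sum := by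
  induction I with
  | nil => exact ⟨rfl, rfl⟩
  | cons i I ih =>
    refine ⟨entryAt T (c + code i), _, _, ?_, rfl, ih, by simp⟩
    exact Nat.le_of_lt_succ (Nat.mod_lt _ (by norm_num))

/-- Soundness of `nonsing`: a vector `v` modulo 23 killed by the matrix is zero. -/
theorem nonsing_sound {f : ℕ → ℕ} (hf : ∀ c, f c < 256) {m k : ℕ} {P : ℕ → Bool}
    {code : ℕ → ℕ} {r : ℕ} (hr : r ≤ 500)
    (hcode : ∀ i < r, ∀ j < r, code i + code j < m * k)
    (h : nonsing f m k P code r = true) (v : ℕ → ZMod 23)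
    (hv : ∀ i ∈ (range r).filter (fun i => P i = true),
      ∑ j ∈ (range r).filter (fun i => P i = true), v j * (f (code i + code j) : ZMod 23) = 0) :
    ∀ i ∈ (range r).filter (fun i => P i = true), v i = 0 := by
  set I := (List.range r).filter P with hI
  have hmemI : ∀ i, i ∈ I ↔ i ∈ (range r).filter (fun i => P i = true) := by
    intro i; simp [hI]
  have hsum : ∀ g : ℕ → ZMod 23,
      (I.map g).sum = ∑ j ∈ (range r).filter (fun i => P i = true), g j := by
    intro g
    rw [← List.sum_toFinset _ (List.nodup_range.filter _)]
    refine Finset.sum_congr ?_ fun _ _ => rfl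
    ext i; rw [List.mem_toFinset]; exact hmemI i
  unfold nonsing at h
  rw [force_eq, gather_eq, List.append_nil, force_eq, List.length_map] at h
  have hlen : I.length ≤ 500 := (List.length_filter_le _ _).trans (by simpa using hr)
  have := elim_sound (I.map v) 255 (packRows (table f m k) (I.map code) (I.map code) [])
    (by rw [List.length_map]; omega) ?_ (by rw [List.length_map]; exact h)
  · intro i hi
    exact this _ (List.mem_map.2 ⟨i, (hmemI i).2 hi, rfl⟩)
  · intro N hN
    rcases mem_packRows _ _ _ _ N hN with hN | ⟨c, hc, rfl⟩
    · simp at hN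
    · obtain ⟨i, hi, rfl⟩ := List.mem_map.1 hc
      have h1 := rep_packRow (table f m k) (code i) code v I
      have h2 : (I.map (fun j => (entryAt (table f m k) (code i + code j) : ZMod 23) * v j)).sum
          = 0 := by
        rw [hsum, ← hv i ((hmemI i).1 hi)]
        refine Finset.sum_congr rfl fun j hj => ?_
        rw [entryAt_table hf (hcode i ?_ j ?_), mul_comm]
        · simpa using (Finset.mem_filter.1 ((hmemI i).1 hi)).1
        · simpa using (Finset.mem_filter.1 hj).1
      rw [h2] at h1
      rwa [untag_tag]

/-! ### The dual functional -/

/-- For `g ≤ 11`, `11!` times the coefficient of `z ^ g` in `z ^ a * exp (w * z)`: this is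
`11! * w ^ (g - a) / (g - a)!` for `a ≤ g` and zero for `g < a`. -/
def expCoeff (w g a : ℕ) : ℕ :=
  if a ≤ g then w ^ (g - a) * Nat.descFactorial 11 (11 - (g - a)) else 0

/-- The minor of the rows `u`, `v` in the columns `a`, `b`. -/
def minor2 {R : Type*} [CommRing R] (u v : ℕ → R) (a b : ℕ) : R := u a * v b - u b * v a

/-- The minor of three rows in the columns `a`, `b`, `c`. -/
def minor3 {R : Type*} [CommRing R] (u v w : ℕ → R) (a b c : ℕ) : R :=
  u a * minor2 v w b c - u b * minor2 v w a c + u c * minor2 v w a b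

/-- The minor of four rows in the columns `a`, `b`, `c`, `d`, by Laplace expansion. -/
def minor4 {R : Type*} [CommRing R] (u v w z : ℕ → R) (a b c d : ℕ) : R :=
  minor2 u v a b * minor2 w z c d - minor2 u v a c * minor2 w z b d
    + minor2 u v a d * minor2 w z b c + minor2 u v b c * minor2 w z a d
    - minor2 u v b d * minor2 w z a c + minor2 u v c d * minor2 w z a b

/-- The functional of socle degree for `n = 4`, extended multilinearly: `u i g` stands for the
power `g` of the `i`-th variable. A monomial in `x_2, x_3, x_4` is antisymmetrized over the odd
powers and divided by `x_2 x_3 x_4` times the Vandermonde determinant of the squares; the resulting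
Schur polynomial in the squares is expressed by `x_1` (`s_1 = e_1 = 4 x_1²`), and the coefficient of
`x_1³` is taken. -/
def form4 {R : Type*} [CommRing R] (u : Fin 4 → ℕ → R) : R :=
  u 0 3 * minor3 (u 1) (u 2) (u 3) 1 3 5 + 4 * u 0 1 * minor3 (u 1) (u 2) (u 3) 1 3 7

/-- The functional of socle degree for `n = 5`, built as `form4`, with the coefficient of `x_1⁴`;
here `s_1 = 5 x_1²`, `s_2 = e_1² - e_2 = 15 x_1⁴` and `s_{1,1} = e_2 = 10 x_1⁴`. -/
def form5 {R : Type*} [CommRing R] (u : Fin 5 → ℕ → R) : R :=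
  u 0 4 * minor4 (u 1) (u 2) (u 3) (u 4) 1 3 5 7
    + 5 * u 0 2 * minor4 (u 1) (u 2) (u 3) (u 4) 1 3 5 9
    + 15 * u 0 0 * minor4 (u 1) (u 2) (u 3) (u 4) 1 3 5 11
    + 10 * u 0 0 * minor4 (u 1) (u 2) (u 3) (u 4) 1 3 7 9

/-- The rows with entries `expCoeff (i + 1) g (α i)`. -/
def expRows (R : Type*) [CommRing R] {n : ℕ} (α : Fin n →₀ ℕ) (i : Fin n) (g : ℕ) : R :=
  (expCoeff (i + 1) g (α i) : R)

/-- The value on the monomial `α` of the functional `q ↦ φ (q * exp ω)`, up to a constant, where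
`φ` is the functional `form4` of degree 12. -/
def psi4 (α : Fin 4 →₀ ℕ) : ℤ := form4 (expRows ℤ α)

/-- The value on the monomial `α` of the functional `q ↦ φ (q * exp ω)`, up to a constant, where
`φ` is the functional `form5` of degree 20. -/
def psi5 (α : Fin 5 →₀ ℕ) : ℤ := form5 (expRows ℤ α)

lemma psi4_cast {R : Type*} [CommRing R] (α : Fin 4 →₀ ℕ) :
    ((psi4 α : ℤ) : R) = form4 (expRows R α) := by
  simp only [psi4, form4, minor3, minor2, expRows]
  push_cast
  rfl

lemma psi5_cast {R : Type*} [CommRing R] (α : Fin 5 →₀ ℕ) :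
    ((psi5 α : ℤ) : R) = form5 (expRows R α) := by
  simp only [psi5, form5, minor4, minor2, expRows]
  push_cast
  rfl

lemma expCoeff_add_two (w g a : ℕ) : expCoeff w (g + 2) (a + 2) = expCoeff w g a := by
  simp [expCoeff]

lemma expCoeff_eq_zero {w g a : ℕ} (h : g < a) : expCoeff w g a = 0 := by
  simp [expCoeff, Nat.not_le.2 h]

/-- The differential equation of `exp (w z)`. -/
lemma expCoeff_succ (w : ℕ) {g a : ℕ} (hg : g ≤ 11) :
    (w : ℝ) * expCoeff w g (a + 1) = ((g : ℝ) - a) * expCoeff w g a := by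
  rcases lt_trichotomy g a with h | rfl | h
  · rw [expCoeff_eq_zero h, expCoeff_eq_zero (by omega)]; simp
  · rw [expCoeff_eq_zero (by omega)]; simp
  · obtain ⟨s, rfl⟩ : ∃ s, g = a + (s + 1) := ⟨g - a - 1, by omega⟩
    have h1 : 11 - s = (11 - (s + 1)) + 1 := by omega
    have h2 : a + (s + 1) - (a + 1) = s := by omega
    have h3 : 11 - (11 - (s + 1)) = s + 1 := by omega
    rw [expCoeff, expCoeff, if_pos (by omega), if_pos (by omega), h2, h1,
      Nat.descFactorial_succ, h3, Nat.add_sub_cancel_left]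
    push_cast
    ring

lemma form4_update_mul {R : Type*} [CommRing R] (u : Fin 4 → ℕ → R) (i : Fin 4) (c : R)
    (r : ℕ → R) : form4 (Function.update u i (fun g => c * r g))
      = c * form4 (Function.update u i r) := by
  fin_cases i <;> simp [form4, minor3, minor2, Function.update, Fin.ext_iff] <;> ring

lemma form5_update_mul {R : Type*} [CommRing R] (u : Fin 5 → ℕ → R) (i : Fin 5) (c : R)
    (r : ℕ → R) : form5 (Function.update u i (fun g => c * r g))
      = c * form5 (Function.update u i r) := by
  fin_cases i <;> simp [form5, minor4, minor2, Function.update, Fin.ext_iff] <;> ring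

/-- `form4` is homogeneous of degree 12, in infinitesimal form. -/
lemma form4_euler (u v : Fin 4 → ℕ → ℝ) (b : Fin 4 → ℝ)
    (h : ∀ i g, g ≤ 11 → v i g = ((g : ℝ) - b i) * u i g) :
    ∑ i, form4 (Function.update u i (v i)) = (12 - ∑ i, b i) * form4 u := by
  simp [Fin.sum_univ_four, form4, minor3, minor2, Function.update, Fin.ext_iff, h]
  ring

/-- `form5` is homogeneous of degree 20, in infinitesimal form. -/
lemma form5_euler (u v : Fin 5 → ℕ → ℝ) (b : Fin 5 → ℝ)
    (h : ∀ i g, g ≤ 11 → v i g = ((g : ℝ) - b i) * u i g) :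
    ∑ i, form5 (Function.update u i (v i)) = (20 - ∑ i, b i) * form5 u := by
  simp [Fin.sum_univ_five, form5, minor4, minor2, Function.update, Fin.ext_iff, h]
  ring

lemma expRows_single_add {R : Type*} [CommRing R] {n : ℕ} (i : Fin n) (k : ℕ)
    (β : Fin n →₀ ℕ) : expRows R (Finsupp.single i k + β)
      = Function.update (expRows R β) i (fun g => (expCoeff (i + 1) g (k + β i) : R)) := by
  ext j g
  by_cases h : j = i
  · subst h; simp [expRows]
  · simp [expRows, h]

/-- Euler's identity for `psi4`: the effect of multiplication by `ω`. -/
lemma psi4_euler (β : Fin 4 →₀ ℕ) :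
    ∑ i : Fin 4, ((i.val : ℝ) + 1) * (psi4 (Finsupp.single i 1 + β) : ℝ)
      = (((12 : ℕ) : ℝ) - ∑ i, (β i : ℝ)) * psi4 β := by
  have := form4_euler (expRows ℝ β)
    (fun i g => ((i.val : ℝ) + 1) * (expCoeff (i + 1) g (1 + β i) : ℝ)) (fun i => β i)
    (fun i g hg => by
      have := expCoeff_succ (i + 1) (a := β i) hg
      rw [add_comm 1]; push_cast at this; exact this)
  simp only [psi4_cast, expRows_single_add]
  simp only [form4_update_mul] at this
  exact_mod_cast this

/-- Euler's identity for `psi5`: the effect of multiplication by `ω`. -/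
lemma psi5_euler (β : Fin 5 →₀ ℕ) :
    ∑ i : Fin 5, ((i.val : ℝ) + 1) * (psi5 (Finsupp.single i 1 + β) : ℝ)
      = (((20 : ℕ) : ℝ) - ∑ i, (β i : ℝ)) * psi5 β := by
  have := form5_euler (expRows ℝ β)
    (fun i g => ((i.val : ℝ) + 1) * (expCoeff (i + 1) g (1 + β i) : ℝ)) (fun i => β i)
    (fun i g hg => by
      have := expCoeff_succ (i + 1) (a := β i) hg
      rw [add_comm 1]; push_cast at this; exact this)
  simp only [psi5_cast, expRows_single_add]
  simp only [form5_update_mul] at this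
  exact_mod_cast this

/-! ### The relations and the reduction to the box -/

/-- Multiplication by the square of a variable shifts the powers in its row. -/
def shift {R : Type*} [CommRing R] (u : ℕ → R) (g : ℕ) : R := if g < 2 then 0 else u (g - 2)

lemma expRows_single_two_add {R : Type*} [CommRing R] {n : ℕ} (i : Fin n)
    (β : Fin n →₀ ℕ) : expRows R (Finsupp.single i 2 + β)
      = Function.update (expRows R β) i (shift (expRows R β i)) := by
  rw [expRows_single_add]
  congr 1
  ext g
  unfold shift
  split_ifs with h
  · rw [expCoeff_eq_zero (by omega)]; simp
  · obtain ⟨k, rfl⟩ : ∃ k, g = k + 2 := ⟨g - 2, by omega⟩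
    rw [add_comm 2, expCoeff_add_two]; rfl

lemma sq_mul_monomial {n : ℕ} (i : Fin n) (β : Fin n →₀ ℕ) (c : ℝ) :
    (X i : MvPolynomial (Fin n) ℝ) ^ 2 * monomial β c = monomial (Finsupp.single i 2 + β) c := by
  rw [X_pow_eq_monomial, monomial_mul, one_mul]

lemma esymmOf_one {R : Type*} [CommRing R] {m : ℕ} (v : Fin m → R) : esymmOf 1 v = ∑ i, v i := by
  simp [esymmOf, Finset.powersetCard_one]

lemma esymmOf_three_two {R : Type*} [CommRing R] (v : Fin 3 → R) :
    esymmOf 2 v = v 0 * v 1 + v 0 * v 2 + v 1 * v 2 := by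
  have : Finset.powersetCard 2 (Finset.univ : Finset (Fin 3)) = {{0, 1}, {0, 2}, {1, 2}} := by
    decide
  rw [esymmOf, this, Finset.sum_insert (by decide), Finset.sum_insert (by decide),
    Finset.sum_singleton]
  simp [add_assoc]

lemma esymmOf_three_three {R : Type*} [CommRing R] (v : Fin 3 → R) :
    esymmOf 3 v = v 0 * v 1 * v 2 := by
  have : Finset.powersetCard 3 (Finset.univ : Finset (Fin 3)) = {Finset.univ} := by
    decide
  rw [esymmOf, this, Finset.sum_singleton, Fin.prod_univ_three]

lemma esymmOf_four_two {R : Type*} [CommRing R] (v : Fin 4 → R) :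
    esymmOf 2 v = v 0 * v 1 + v 0 * v 2 + v 0 * v 3 + v 1 * v 2 + v 1 * v 3 + v 2 * v 3 := by
  have : Finset.powersetCard 2 (Finset.univ : Finset (Fin 4)) =
      {{0, 1}, {0, 2}, {0, 3}, {1, 2}, {1, 3}, {2, 3}} := by
    decide
  rw [esymmOf, this]
  repeat rw [Finset.sum_insert (by decide)]
  simp [add_assoc]

lemma esymmOf_four_three {R : Type*} [CommRing R] (v : Fin 4 → R) :
    esymmOf 3 v = v 0 * v 1 * v 2 + v 0 * v 1 * v 3 + v 0 * v 2 * v 3 + v 1 * v 2 * v 3 := by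
  have : Finset.powersetCard 3 (Finset.univ : Finset (Fin 4)) =
      {{0, 1, 2}, {0, 1, 3}, {0, 2, 3}, {1, 2, 3}} := by
    decide
  have h3 : ∀ a b c : Fin 4, a ≠ b → a ≠ c → b ≠ c → ∏ i ∈ {a, b, c}, v i = v a * v b * v c := by
    intro a b c h1 h2 h3
    rw [Finset.prod_insert (by simp [h1, h2]), Finset.prod_pair h3, mul_assoc]
  rw [esymmOf, this]
  repeat rw [Finset.sum_insert (by decide)]
  rw [Finset.sum_singleton, h3 _ _ _ (by decide) (by decide) (by decide),
    h3 _ _ _ (by decide) (by decide) (by decide), h3 _ _ _ (by decide) (by decide) (by decide),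
    h3 _ _ _ (by decide) (by decide) (by decide)]
  ring

lemma esymmOf_four_four {R : Type*} [CommRing R] (v : Fin 4 → R) :
    esymmOf 4 v = v 0 * v 1 * v 2 * v 3 := by
  have : Finset.powersetCard 4 (Finset.univ : Finset (Fin 4)) = {Finset.univ} := by
    decide
  rw [esymmOf, this, Finset.sum_singleton, Fin.prod_univ_four]

lemma rel3_four : rel3 4 = ![
    C 4 * X 0 ^ 2 - (X 1 ^ 2 + X 2 ^ 2 + X 3 ^ 2),
    C 6 * (X 0 ^ 2 * X 0 ^ 2) - (X 1 ^ 2 * X 2 ^ 2 + X 1 ^ 2 * X 3 ^ 2 + X 2 ^ 2 * X 3 ^ 2),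
    C 4 * (X 0 ^ 2 * X 0 ^ 2 * X 0 ^ 2) - X 1 ^ 2 * X 2 ^ 2 * X 3 ^ 2,
    X 0 ^ 2 * X 0 ^ 2] := by
  have h4 : ((4 : ℕ) : MvPolynomial (Fin 4) ℝ) = C 4 := (map_ofNat C 4).symm
  have h6 : ((6 : ℕ) : MvPolynomial (Fin 4) ℝ) = C 6 := (map_ofNat C 6).symm
  have c2 : Nat.choose 4 2 = 6 := by decide
  have c3 : Nat.choose 4 3 = 4 := by decide
  ext1 j
  fin_cases j
  · change ((Nat.choose 4 1 : ℕ) : MvPolynomial (Fin 4) ℝ) * X 0 ^ 2 - esymmOf 1 (sqArgs 4) = _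
    rw [Nat.choose_one_right, h4, esymmOf_one]
    exact congrArg _ (Fin.sum_univ_three _)
  · change ((Nat.choose 4 2 : ℕ) : MvPolynomial (Fin 4) ℝ) * X 0 ^ 4 - esymmOf 2 (sqArgs 4) = _
    rw [c2, h6, show (X 0 : MvPolynomial (Fin 4) ℝ) ^ 4 = X 0 ^ 2 * X 0 ^ 2 by ring]
    exact congrArg _ (esymmOf_three_two _)
  · change ((Nat.choose 4 3 : ℕ) : MvPolynomial (Fin 4) ℝ) * X 0 ^ 6 - esymmOf 3 (sqArgs 4) = _
    rw [c3, h4, show (X 0 : MvPolynomial (Fin 4) ℝ) ^ 6 = X 0 ^ 2 * X 0 ^ 2 * X 0 ^ 2 by ring]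
    exact congrArg _ (esymmOf_three_three _)
  · change (X 0 : MvPolynomial (Fin 4) ℝ) ^ 4 = X 0 ^ 2 * X 0 ^ 2
    ring

lemma rel3_five : rel3 5 = ![
    C 5 * X 0 ^ 2 - (X 1 ^ 2 + X 2 ^ 2 + X 3 ^ 2 + X 4 ^ 2),
    C 10 * (X 0 ^ 2 * X 0 ^ 2) - (X 1 ^ 2 * X 2 ^ 2 + X 1 ^ 2 * X 3 ^ 2 + X 1 ^ 2 * X 4 ^ 2
      + X 2 ^ 2 * X 3 ^ 2 + X 2 ^ 2 * X 4 ^ 2 + X 3 ^ 2 * X 4 ^ 2),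
    C 10 * (X 0 ^ 2 * X 0 ^ 2 * X 0 ^ 2) - (X 1 ^ 2 * X 2 ^ 2 * X 3 ^ 2
      + X 1 ^ 2 * X 2 ^ 2 * X 4 ^ 2 + X 1 ^ 2 * X 3 ^ 2 * X 4 ^ 2 + X 2 ^ 2 * X 3 ^ 2 * X 4 ^ 2),
    C 5 * (X 0 ^ 2 * X 0 ^ 2 * X 0 ^ 2 * X 0 ^ 2) - X 1 ^ 2 * X 2 ^ 2 * X 3 ^ 2 * X 4 ^ 2,
    X 0 ^ 5] := by
  have h5 : ((5 : ℕ) : MvPolynomial (Fin 5) ℝ) = C 5 := (map_ofNat C 5).symm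
  have h10 : ((10 : ℕ) : MvPolynomial (Fin 5) ℝ) = C 10 := (map_ofNat C 10).symm
  have c2 : Nat.choose 5 2 = 10 := by decide
  have c3 : Nat.choose 5 3 = 10 := by decide
  have c4 : Nat.choose 5 4 = 5 := by decide
  ext1 j
  fin_cases j
  · change ((Nat.choose 5 1 : ℕ) : MvPolynomial (Fin 5) ℝ) * X 0 ^ 2 - esymmOf 1 (sqArgs 5) = _
    rw [Nat.choose_one_right, h5, esymmOf_one]
    exact congrArg _ (Fin.sum_univ_four _)
  · change ((Nat.choose 5 2 : ℕ) : MvPolynomial (Fin 5) ℝ) * X 0 ^ 4 - esymmOf 2 (sqArgs 5) = _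
    rw [c2, h10, show (X 0 : MvPolynomial (Fin 5) ℝ) ^ 4 = X 0 ^ 2 * X 0 ^ 2 by ring]
    exact congrArg _ (esymmOf_four_two _)
  · change ((Nat.choose 5 3 : ℕ) : MvPolynomial (Fin 5) ℝ) * X 0 ^ 6 - esymmOf 3 (sqArgs 5) = _
    rw [c3, h10, show (X 0 : MvPolynomial (Fin 5) ℝ) ^ 6 = X 0 ^ 2 * X 0 ^ 2 * X 0 ^ 2 by ring]
    exact congrArg _ (esymmOf_four_three _)
  · change ((Nat.choose 5 4 : ℕ) : MvPolynomial (Fin 5) ℝ) * X 0 ^ 8 - esymmOf 4 (sqArgs 5) = _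
    rw [c4, h5, show (X 0 : MvPolynomial (Fin 5) ℝ) ^ 8
      = X 0 ^ 2 * X 0 ^ 2 * X 0 ^ 2 * X 0 ^ 2 by ring]
    exact congrArg _ (esymmOf_four_four _)
  · rfl

/-- A functional that kills all monomial multiples of the generators kills the ideal. -/
lemma functional_eq_zero_of_mem {n : ℕ} (ψ : (Fin n →₀ ℕ) → ℤ)
    (F : Fin n → MvPolynomial (Fin n) ℝ)
    (h : ∀ j β, functional ψ (F j * monomial β 1) = 0) :
    ∀ q ∈ Ideal.span (Set.range F), functional ψ q = 0 := by
  intro q hq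
  obtain ⟨c, rfl⟩ := Ideal.mem_span_range_iff_exists_fun.1 hq
  rw [map_sum]
  refine Finset.sum_eq_zero fun j _ => ?_
  rw [(c j).as_sum, Finset.sum_mul, map_sum]
  refine Finset.sum_eq_zero fun β _ => ?_
  have : monomial β (coeff β (c j)) * F j = coeff β (c j) • (F j * monomial β 1) := by
    rw [mul_comm, ← mul_smul_comm, smul_monomial, smul_eq_mul, mul_one]
  rw [this, map_smul, h, smul_zero]

/-- By multilinearity each generator becomes an identity between minors. -/
lemma functional_psi4_rel (q : MvPolynomial (Fin 4) ℝ)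
    (hq : q ∈ Ideal.span (Set.range (rel3 4))) : functional psi4 q = 0 := by
  refine functional_eq_zero_of_mem psi4 _ (fun j β => ?_) q hq
  rw [rel3_four]
  fin_cases j <;>
  simp only [Fin.zero_eta, Fin.mk_one, Fin.reduceFinMk, Matrix.cons_val, Matrix.cons_val_zero,
    Matrix.cons_val_one, sub_mul, add_mul, mul_assoc, sq_mul_monomial, C_mul_monomial, map_sub,
    map_add, functional_monomial, psi4_cast, expRows_single_two_add] <;>
  simp [form4, minor3, minor2, Function.update, Fin.ext_iff, shift] <;>
  ring

lemma functional_psi5_rel (q : MvPolynomial (Fin 5) ℝ)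
    (hq : q ∈ Ideal.span (Set.range (rel3 5))) : functional psi5 q = 0 := by
  refine functional_eq_zero_of_mem psi5 _ (fun j β => ?_) q hq
  rw [rel3_five]
  fin_cases j <;>
  simp only [Fin.zero_eta, Fin.mk_one, Fin.reduceFinMk, Matrix.cons_val, Matrix.cons_val_zero,
    Matrix.cons_val_one, sub_mul, add_mul, mul_assoc, sq_mul_monomial, C_mul_monomial, map_sub,
    map_add, functional_monomial, psi5_cast, expRows_single_two_add]
  iterate 4
    · simp [form5, minor4, minor2, Function.update, Fin.ext_iff, shift]
      try ring
  · rw [X_pow_eq_monomial, monomial_mul, functional_monomial, psi5_cast, expRows_single_add]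
    have h0 : ∀ g < 5, expCoeff 1 g (5 + β 0) = 0 := fun g hg => expCoeff_eq_zero (by omega)
    simp [form5, Function.update, Fin.ext_iff, h0]

/-- The monomial with exponent vector `a`. -/
def mon {n : ℕ} (a : Fin n → ℕ) : MvPolynomial (Fin n) ℝ := ∏ i, X i ^ a i

lemma mon_mem_lowSpan {n : ℕ} {a : Fin n → ℕ} {e w : ℕ} (c : ℝ) (h1 : ∑ i, a i = e)
    (h2 : ∑ i : Fin n, (i : ℕ) * a i < w) : c • mon a ∈ lowSpan n e w := by
  refine Submodule.smul_mem _ _ (Submodule.subset_span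
    ⟨Finsupp.equivFunOnFinite.symm a, by simpa using h1, by simpa using h2, ?_⟩)
  rw [monomial_eq, C_1, one_mul, Finsupp.prod_fintype _ _ (by simp)]
  simp [mon]

lemma mon_four (a b c d : ℕ) : mon ![a, b, c, d] = X 0 ^ a * X 1 ^ b * X 2 ^ c * X 3 ^ d := by
  simp [mon, Fin.prod_univ_four]

lemma mon_five (a b c d e : ℕ) :
    mon ![a, b, c, d, e] = X 0 ^ a * X 1 ^ b * X 2 ^ c * X 3 ^ d * X 4 ^ e := by
  simp [mon, Fin.prod_univ_five]

/-- With `y_i = x_i ^ 2`, the complete symmetric polynomial `h_{4-k}(y_1, …, y_k)` is a combination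
of lower terms modulo the relations; this brings the exponents below `(4, 6, 4, 2)`. -/
lemma reduction_four (k : Fin 4) : ∃ r ∈ lowSpan 4 (![4, 6, 4, 2] k) (k * ![4, 6, 4, 2] k),
    X k ^ (![4, 6, 4, 2] k) - r ∈ Ideal.span (Set.range (rel3 4)) := by
  have hF : ∀ j, rel3 4 j ∈ Ideal.span (Set.range (rel3 4)) := fun j =>
    Ideal.subset_span ⟨j, rfl⟩
  generalize Ideal.span (Set.range (rel3 4)) = I at *
  rw [rel3_four] at hF
  have F1 := hF 0
  have F2 := hF 1
  have F3 := hF 2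
  have F4 := hF 3
  simp only [Matrix.cons_val, Matrix.cons_val_zero, Matrix.cons_val_one, map_ofNat]
    at F1 F2 F3 F4
  fin_cases k <;> simp only [Fin.zero_eta, Fin.mk_one, Fin.reduceFinMk, Matrix.cons_val,
    Matrix.cons_val_zero, Matrix.cons_val_one]
  · refine ⟨0, Submodule.zero_mem _, ?_⟩
    convert F4 using 1
    ring
  · refine ⟨(4 : ℝ) • mon ![2, 4, 0, 0] + (-6 : ℝ) • mon ![4, 2, 0, 0]
      + (4 : ℝ) • mon ![6, 0, 0, 0], ?_, ?_⟩
    · refine add_mem (add_mem ?_ ?_) ?_ <;> exact mon_mem_lowSpan _ (by decide) (by decide)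
    · simp only [mon_four, smul_eq_C_mul, map_neg, map_ofNat]
      convert I.sub_mem (I.sub_mem (I.mul_mem_left (X 1 ^ 2) F2) (I.mul_mem_left (X 1 ^ 4) F1)) F3
        using 1
      ring
  · refine ⟨(-1 : ℝ) • mon ![0, 2, 2, 0] + (-1 : ℝ) • mon ![0, 4, 0, 0]
      + (4 : ℝ) • mon ![2, 2, 0, 0] + (4 : ℝ) • mon ![2, 0, 2, 0]
      + (-6 : ℝ) • mon ![4, 0, 0, 0], ?_, ?_⟩
    · refine add_mem (add_mem (add_mem (add_mem ?_ ?_) ?_) ?_) ?_ <;>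
        exact mon_mem_lowSpan _ (by decide) (by decide)
    · simp only [mon_four, smul_eq_C_mul, map_neg, map_ofNat, map_one]
      convert I.sub_mem F2 (I.mul_mem_left (X 1 ^ 2 + X 2 ^ 2) F1) using 1
      ring
  · refine ⟨(4 : ℝ) • mon ![2, 0, 0, 0] + (-1 : ℝ) • mon ![0, 2, 0, 0]
      + (-1 : ℝ) • mon ![0, 0, 2, 0], ?_, ?_⟩
    · refine add_mem (add_mem ?_ ?_) ?_ <;> exact mon_mem_lowSpan _ (by decide) (by decide)
    · simp only [mon_four, smul_eq_C_mul, map_neg, map_ofNat, map_one]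
      convert I.neg_mem F1 using 1
      ring

/-- With `y_i = x_i ^ 2`, the complete symmetric polynomial `h_{5-k}(y_1, …, y_k)` is a combination
of lower terms modulo the relations; this brings the exponents below `(5, 8, 6, 4, 2)`. -/
lemma reduction_five (k : Fin 5) : ∃ r ∈ lowSpan 5 (![5, 8, 6, 4, 2] k) (k * ![5, 8, 6, 4, 2] k),
    X k ^ (![5, 8, 6, 4, 2] k) - r ∈ Ideal.span (Set.range (rel3 5)) := by
  have hF : ∀ j, rel3 5 j ∈ Ideal.span (Set.range (rel3 5)) := fun j =>
    Ideal.subset_span ⟨j, rfl⟩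
  generalize Ideal.span (Set.range (rel3 5)) = I at *
  rw [rel3_five] at hF
  have F1 := hF 0
  have F2 := hF 1
  have F3 := hF 2
  have F4 := hF 3
  have F5 := hF 4
  simp only [Matrix.cons_val, Matrix.cons_val_zero, Matrix.cons_val_one, map_ofNat]
    at F1 F2 F3 F4 F5
  fin_cases k <;> simp only [Fin.zero_eta, Fin.mk_one, Fin.reduceFinMk, Matrix.cons_val,
    Matrix.cons_val_zero, Matrix.cons_val_one]
  · refine ⟨0, Submodule.zero_mem _, ?_⟩
    convert F5 using 1
    ring
  · refine ⟨(5 : ℝ) • mon ![2, 6, 0, 0, 0] + (-10 : ℝ) • mon ![4, 4, 0, 0, 0]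
      + (10 : ℝ) • mon ![6, 2, 0, 0, 0] + (-5 : ℝ) • mon ![8, 0, 0, 0, 0], ?_, ?_⟩
    · refine add_mem (add_mem (add_mem ?_ ?_) ?_) ?_ <;>
        exact mon_mem_lowSpan _ (by decide) (by decide)
    · simp only [mon_five, smul_eq_C_mul, map_neg, map_ofNat]
      convert I.add_mem (I.sub_mem (I.sub_mem (I.mul_mem_left (X 1 ^ 4) F2)
        (I.mul_mem_left (X 1 ^ 6) F1)) (I.mul_mem_left (X 1 ^ 2) F3)) F4 using 1
      ring
  · refine ⟨(-1 : ℝ) • mon ![0, 2, 4, 0, 0] + (-1 : ℝ) • mon ![0, 4, 2, 0, 0]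
      + (-1 : ℝ) • mon ![0, 6, 0, 0, 0] + (5 : ℝ) • mon ![2, 0, 4, 0, 0]
      + (5 : ℝ) • mon ![2, 2, 2, 0, 0] + (5 : ℝ) • mon ![2, 4, 0, 0, 0]
      + (-10 : ℝ) • mon ![4, 2, 0, 0, 0] + (-10 : ℝ) • mon ![4, 0, 2, 0, 0]
      + (10 : ℝ) • mon ![6, 0, 0, 0, 0], ?_, ?_⟩
    · refine add_mem (add_mem (add_mem (add_mem (add_mem (add_mem (add_mem (add_mem
        ?_ ?_) ?_) ?_) ?_) ?_) ?_) ?_) ?_ <;> exact mon_mem_lowSpan _ (by decide) (by decide)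
    · simp only [mon_five, smul_eq_C_mul, map_neg, map_ofNat, map_one]
      convert I.sub_mem (I.sub_mem (I.mul_mem_left (X 1 ^ 2 + X 2 ^ 2) F2)
        (I.mul_mem_left (X 1 ^ 4 + X 1 ^ 2 * X 2 ^ 2 + X 2 ^ 4) F1)) F3 using 1
      ring
  · refine ⟨(-1 : ℝ) • mon ![0, 2, 0, 2, 0] + (-1 : ℝ) • mon ![0, 0, 2, 2, 0]
      + (-1 : ℝ) • mon ![0, 4, 0, 0, 0] + (-1 : ℝ) • mon ![0, 2, 2, 0, 0]
      + (-1 : ℝ) • mon ![0, 0, 4, 0, 0] + (5 : ℝ) • mon ![2, 2, 0, 0, 0]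
      + (5 : ℝ) • mon ![2, 0, 2, 0, 0] + (5 : ℝ) • mon ![2, 0, 0, 2, 0]
      + (-10 : ℝ) • mon ![4, 0, 0, 0, 0], ?_, ?_⟩
    · refine add_mem (add_mem (add_mem (add_mem (add_mem (add_mem (add_mem (add_mem
        ?_ ?_) ?_) ?_) ?_) ?_) ?_) ?_) ?_ <;> exact mon_mem_lowSpan _ (by decide) (by decide)
    · simp only [mon_five, smul_eq_C_mul, map_neg, map_ofNat, map_one]
      convert I.sub_mem F2 (I.mul_mem_left (X 1 ^ 2 + X 2 ^ 2 + X 3 ^ 2) F1) using 1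
      ring
  · refine ⟨(5 : ℝ) • mon ![2, 0, 0, 0, 0] + (-1 : ℝ) • mon ![0, 2, 0, 0, 0]
      + (-1 : ℝ) • mon ![0, 0, 2, 0, 0] + (-1 : ℝ) • mon ![0, 0, 0, 2, 0], ?_, ?_⟩
    · refine add_mem (add_mem (add_mem ?_ ?_) ?_) ?_ <;>
        exact mon_mem_lowSpan _ (by decide) (by decide)
    · simp only [mon_five, smul_eq_C_mul, map_neg, map_ofNat, map_one]
      convert I.neg_mem F1 using 1
      ring

/-! ### Gram matrices modulo 23 -/

/-- The digit `g` of a row, in base 32. -/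
def digit (r g : ℕ) : ℕ := Nat.mod (Nat.div r (Nat.pow 32 g)) 32

/-- The row of the `expCoeff w g a` modulo 23 for `g < 12`, from the row `tab` of the
`expCoeff w g 0`, which is stored with an offset of 16 digits. -/
def rowOf (tab a : ℕ) : ℕ := Nat.div tab (Nat.pow 32 (Nat.sub 16 a))

/-- The stored rows for the weights `1, …, 5`. -/
def stored (w : ℕ) : ℕ := match w with
  | 1 => 59295877521058875742930228223320166236160
  | 2 => 67380419925096169972809913121579997331456
  | 3 => 69511342850933765219776189259481966706688
  | 4 => 70961610495095243531610874932523922620416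
  | _ => 968380700065886537065276092796849061101568

lemma digit_rowOf : ∀ w < 6, 1 ≤ w → ∀ a < 12, ∀ g < 12,
    digit (rowOf (stored w) a) g = expCoeff w g a % 23 := by
  decide +kernel

lemma digit_rowOf_cast {w a g : ℕ} (hw : w < 6) (hw' : 1 ≤ w) (ha : a < 12) (hg : g < 12) :
    (digit (rowOf (stored w) a) g : ZMod 23) = expCoeff w g a := by
  rw [digit_rowOf w hw hw' a ha g hg, ZMod.natCast_mod]

/-- `x * y`, with `y` not evaluated if `x = 0`. -/
def lazyMul (x y : ℕ) : ℕ := Nat.rec 0 (fun e _ => Nat.mul (Nat.succ e) y) x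

lemma lazyMul_eq (x y : ℕ) : lazyMul x y = x * y := by
  cases x with
  | zero => exact (Nat.zero_mul y).symm
  | succ x => rfl

/-- `minor2` modulo 23, with `22` for `-1`. -/
def minor2N (r s a b : ℕ) : ℕ :=
  Nat.add (Nat.mul (digit r a) (digit s b)) (Nat.mul 22 (Nat.mul (digit r b) (digit s a)))

/-- `minor3` modulo 23. -/
def minor3N (r s t a b c : ℕ) : ℕ :=
  Nat.add (Nat.add (Nat.mul (digit r a) (minor2N s t b c))
    (Nat.mul 22 (Nat.mul (digit r b) (minor2N s t a c)))) (Nat.mul (digit r c) (minor2N s t a b))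

/-- `minor4` modulo 23. -/
def minor4N (r s t u a b c d : ℕ) : ℕ :=
  Nat.add (Nat.add
    (Nat.add (Nat.mul (minor2N r s a b) (minor2N t u c d))
      (Nat.mul 22 (Nat.mul (minor2N r s a c) (minor2N t u b d))))
    (Nat.add (Nat.mul (minor2N r s a d) (minor2N t u b c))
      (Nat.mul (minor2N r s b c) (minor2N t u a d))))
    (Nat.add (Nat.mul 22 (Nat.mul (minor2N r s b d) (minor2N t u a c)))
      (Nat.mul (minor2N r s c d) (minor2N t u a b)))

/-- `psi4` modulo 23. -/
def psi4N (a0 a1 a2 a3 : ℕ) : ℕ :=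
  force (rowOf (stored 1) a0) fun r0 => force (rowOf (stored 2) a1) fun r1 =>
  force (rowOf (stored 3) a2) fun r2 => force (rowOf (stored 4) a3) fun r3 =>
  Nat.mod (Nat.add (lazyMul (digit r0 3) (minor3N r1 r2 r3 1 3 5))
    (lazyMul (Nat.mul 4 (digit r0 1)) (minor3N r1 r2 r3 1 3 7))) 23

/-- `psi5` modulo 23. -/
def psi5N (a0 a1 a2 a3 a4 : ℕ) : ℕ :=
  force (rowOf (stored 1) a0) fun r0 => force (rowOf (stored 2) a1) fun r1 =>
  force (rowOf (stored 3) a2) fun r2 => force (rowOf (stored 4) a3) fun r3 =>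
  force (rowOf (stored 5) a4) fun r4 =>
  Nat.mod (Nat.add
    (Nat.add (lazyMul (digit r0 4) (minor4N r1 r2 r3 r4 1 3 5 7))
      (lazyMul (Nat.mul 5 (digit r0 2)) (minor4N r1 r2 r3 r4 1 3 5 9)))
    (Nat.add (lazyMul (Nat.mul 15 (digit r0 0)) (minor4N r1 r2 r3 r4 1 3 5 11))
      (lazyMul (Nat.mul 10 (digit r0 0)) (minor4N r1 r2 r3 r4 1 3 7 9)))) 23

lemma minor2N_cast (r s a b : ℕ) : (minor2N r s a b : ZMod 23) =
    minor2 (fun g => (digit r g : ZMod 23)) (fun g => (digit s g : ZMod 23)) a b := by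
  have h22 : (22 : ZMod 23) = -1 := by decide
  change ((digit r a * digit s b + 22 * (digit r b * digit s a) : ℕ) : ZMod 23) = _
  push_cast
  rw [h22, minor2]
  ring

lemma minor3N_cast (r s t a b c : ℕ) : (minor3N r s t a b c : ZMod 23) =
    minor3 (fun g => (digit r g : ZMod 23)) (fun g => (digit s g : ZMod 23))
      (fun g => (digit t g : ZMod 23)) a b c := by
  have h22 : (22 : ZMod 23) = -1 := by decide
  change ((digit r a * minor2N s t b c + 22 * (digit r b * minor2N s t a c)
    + digit r c * minor2N s t a b : ℕ) : ZMod 23) = _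
  push_cast
  rw [h22, minor3]
  simp only [minor2N_cast]
  ring

lemma minor4N_cast (r s t u a b c d : ℕ) : (minor4N r s t u a b c d : ZMod 23) =
    minor4 (fun g => (digit r g : ZMod 23)) (fun g => (digit s g : ZMod 23))
      (fun g => (digit t g : ZMod 23)) (fun g => (digit u g : ZMod 23)) a b c d := by
  have h22 : (22 : ZMod 23) = -1 := by decide
  change ((minor2N r s a b * minor2N t u c d + 22 * (minor2N r s a c * minor2N t u b d)
    + (minor2N r s a d * minor2N t u b c + minor2N r s b c * minor2N t u a d)
    + (22 * (minor2N r s b d * minor2N t u a c) + minor2N r s c d * minor2N t u a b) : ℕ)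
      : ZMod 23) = _
  push_cast
  rw [h22, minor4]
  simp only [minor2N_cast]
  ring

lemma psi4N_cast (α : Fin 4 →₀ ℕ) (hα : ∀ i, α i < 12) :
    (psi4N (α 0) (α 1) (α 2) (α 3) : ZMod 23) = psi4 α := by
  have e0 : ∀ g < 12, _ := fun g hg => digit_rowOf_cast (w := 1) (by omega) (by omega) (hα 0) hg
  have e1 : ∀ g < 12, _ := fun g hg => digit_rowOf_cast (w := 2) (by omega) (by omega) (hα 1) hg
  have e2 : ∀ g < 12, _ := fun g hg => digit_rowOf_cast (w := 3) (by omega) (by omega) (hα 2) hg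
  have e3 : ∀ g < 12, _ := fun g hg => digit_rowOf_cast (w := 4) (by omega) (by omega) (hα 3) hg
  rw [psi4_cast]
  simp only [psi4N, force_eq]
  generalize rowOf (stored 1) (α 0) = r0 at *
  generalize rowOf (stored 2) (α 1) = r1 at *
  generalize rowOf (stored 3) (α 2) = r2 at *
  generalize rowOf (stored 4) (α 3) = r3 at *
  change ((_ % 23 : ℕ) : ZMod 23) = _
  rw [ZMod.natCast_mod]
  change ((_ + _ : ℕ) : ZMod 23) = _
  rw [lazyMul_eq, lazyMul_eq]
  change ((digit r0 3 * minor3N r1 r2 r3 1 3 5 + (4 * digit r0 1) * minor3N r1 r2 r3 1 3 7 : ℕ)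
    : ZMod 23) = _
  push_cast
  simp only [minor3N_cast]
  simp [form4, minor3, minor2, expRows, e0, e1, e2, e3]

lemma psi5N_cast (α : Fin 5 →₀ ℕ) (hα : ∀ i, α i < 12) :
    (psi5N (α 0) (α 1) (α 2) (α 3) (α 4) : ZMod 23) = psi5 α := by
  have e0 : ∀ g < 12, _ := fun g hg => digit_rowOf_cast (w := 1) (by omega) (by omega) (hα 0) hg
  have e1 : ∀ g < 12, _ := fun g hg => digit_rowOf_cast (w := 2) (by omega) (by omega) (hα 1) hg
  have e2 : ∀ g < 12, _ := fun g hg => digit_rowOf_cast (w := 3) (by omega) (by omega) (hα 2) hg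
  have e3 : ∀ g < 12, _ := fun g hg => digit_rowOf_cast (w := 4) (by omega) (by omega) (hα 3) hg
  have e4 : ∀ g < 12, _ := fun g hg => digit_rowOf_cast (w := 5) (by omega) (by omega) (hα 4) hg
  rw [psi5_cast]
  simp only [psi5N, force_eq]
  generalize rowOf (stored 1) (α 0) = r0 at *
  generalize rowOf (stored 2) (α 1) = r1 at *
  generalize rowOf (stored 3) (α 2) = r2 at *
  generalize rowOf (stored 4) (α 3) = r3 at *
  generalize rowOf (stored 5) (α 4) = r4 at *
  change ((_ % 23 : ℕ) : ZMod 23) = _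
  rw [ZMod.natCast_mod, lazyMul_eq, lazyMul_eq, lazyMul_eq, lazyMul_eq]
  change ((digit r0 4 * minor4N r1 r2 r3 r4 1 3 5 7
    + (5 * digit r0 2) * minor4N r1 r2 r3 r4 1 3 5 9
    + ((15 * digit r0 0) * minor4N r1 r2 r3 r4 1 3 5 11
    + (10 * digit r0 0) * minor4N r1 r2 r3 r4 1 3 7 9) : ℕ) : ZMod 23) = _
  push_cast
  simp only [minor4N_cast]
  simp [form5, minor4, minor2, expRows, e0, e1, e2, e3, e4, add_assoc]

/-- The value of `psi4` modulo 23 at the exponent of degree `2 * d` with code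
`c = (a2 * 3 + a3) * 7 + a0`. -/
def entry4 (d c : ℕ) : ℕ :=
  force (Nat.mod c 7) fun a0 => force (Nat.mod (Nat.div c 7) 3) fun a3 =>
  force (Nat.div c 21) fun a2 => force (Nat.add (Nat.add a0 a2) a3) fun s =>
  cond (Nat.ble s (Nat.mul 2 d)) (force (Nat.sub (Nat.mul 2 d) s) fun a1 =>
    cond (Nat.ble a1 11) (psi4N a0 a1 a2 a3) 0) 0

/-- The value of `psi5` modulo 23 at the exponent of degree `2 * d` with code
`c = ((a2 * 7 + a3) * 3 + a4) * 9 + a0`. -/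
def entry5 (d c : ℕ) : ℕ :=
  force (Nat.mod c 9) fun a0 => force (Nat.mod (Nat.div c 9) 3) fun a4 =>
  force (Nat.mod (Nat.div c 27) 7) fun a3 => force (Nat.div c 189) fun a2 =>
  force (Nat.add (Nat.add a0 a2) (Nat.add a3 a4)) fun s =>
  cond (Nat.ble s (Nat.mul 2 d)) (force (Nat.sub (Nat.mul 2 d) s) fun a1 =>
    cond (Nat.ble a1 11) (cond (Nat.ble a0 4) (psi5N a0 a1 a2 a3 a4) 0) 0) 0

lemma entry4_lt (d c : ℕ) : entry4 d c < 256 := by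
  have : ∀ a b c d, psi4N a b c d < 256 := fun a b c d => by
    simp only [psi4N, force_eq]
    exact (Nat.mod_lt _ (by norm_num)).trans (by norm_num)
  simp only [entry4, force_eq, Bool.cond_eq_ite]
  split_ifs <;> simp [this]

lemma entry5_lt (d c : ℕ) : entry5 d c < 256 := by
  have : ∀ a b c d e, psi5N a b c d e < 256 := fun a b c d e => by
    simp only [psi5N, force_eq]
    exact (Nat.mod_lt _ (by norm_num)).trans (by norm_num)
  simp only [entry5, force_eq, Bool.cond_eq_ite]
  split_ifs <;> simp [this]

lemma entry4_cast {d : ℕ} (α : Fin 4 →₀ ℕ) (hd : ∑ i, α i = 2 * d) (h0 : α 0 < 7)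
    (h2 : α 2 < 7) (h3 : α 3 < 3) :
    (entry4 d ((α 2 * 3 + α 3) * 7 + α 0) : ZMod 23) = psi4 α := by
  set c := (α 2 * 3 + α 3) * 7 + α 0 with hc
  rw [Fin.sum_univ_four] at hd
  have e0 : Nat.mod c 7 = α 0 := by change c % 7 = _; omega
  have e3 : Nat.mod (Nat.div c 7) 3 = α 3 := by change c / 7 % 3 = _; omega
  have e2 : Nat.div c 21 = α 2 := by change c / 21 = _; omega
  have es : Nat.ble (Nat.add (Nat.add (α 0) (α 2)) (α 3)) (Nat.mul 2 d) = true :=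
    Nat.ble_eq_true_of_le (show α 0 + α 2 + α 3 ≤ 2 * d by omega)
  have e1 : Nat.sub (Nat.mul 2 d) (Nat.add (Nat.add (α 0) (α 2)) (α 3)) = α 1 := by
    change 2 * d - (α 0 + α 2 + α 3) = α 1; omega
  simp only [entry4, force_eq, e0, e2, e3, es, e1, cond_true]
  rw [Bool.cond_eq_ite]
  split_ifs with h
  · have h := Nat.le_of_ble_eq_true h
    refine psi4N_cast α fun i => ?_
    fin_cases i <;> simp <;> omega
  · have h : 11 < α 1 := by
      by_contra h'
      exact h (Nat.ble_eq_true_of_le (by omega))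
    have hz : ∀ g < 12, expCoeff 2 g (α 1) = 0 := fun g hg => expCoeff_eq_zero (by omega)
    rw [psi4_cast]
    simp [form4, minor3, minor2, expRows, hz]

lemma entry5_cast {d : ℕ} (α : Fin 5 →₀ ℕ) (hd : ∑ i, α i = 2 * d) (h0 : α 0 < 9)
    (h2 : α 2 < 11) (h3 : α 3 < 7) (h4 : α 4 < 3) :
    (entry5 d (((α 2 * 7 + α 3) * 3 + α 4) * 9 + α 0) : ZMod 23) = psi5 α := by
  set c := ((α 2 * 7 + α 3) * 3 + α 4) * 9 + α 0 with hc
  rw [Fin.sum_univ_five] at hd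
  have e0 : Nat.mod c 9 = α 0 := by change c % 9 = _; omega
  have e4 : Nat.mod (Nat.div c 9) 3 = α 4 := by change c / 9 % 3 = _; omega
  have e3 : Nat.mod (Nat.div c 27) 7 = α 3 := by change c / 27 % 7 = _; omega
  have e2 : Nat.div c 189 = α 2 := by change c / 189 = _; omega
  have es : Nat.ble (Nat.add (Nat.add (α 0) (α 2)) (Nat.add (α 3) (α 4))) (Nat.mul 2 d) = true :=
    Nat.ble_eq_true_of_le (show α 0 + α 2 + (α 3 + α 4) ≤ 2 * d by omega)
  have e1 : Nat.sub (Nat.mul 2 d) (Nat.add (Nat.add (α 0) (α 2)) (Nat.add (α 3) (α 4))) = α 1 := by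
    change 2 * d - (α 0 + α 2 + (α 3 + α 4)) = α 1; omega
  simp only [entry5, force_eq, e0, e2, e3, e4, es, e1, cond_true]
  rw [Bool.cond_eq_ite, Bool.cond_eq_ite]
  split_ifs with h h'
  · have h := Nat.le_of_ble_eq_true h
    refine psi5N_cast α fun i => ?_
    fin_cases i <;> simp <;> omega
  · have h : 4 < α 0 := by
      by_contra h''
      exact h' (Nat.ble_eq_true_of_le (by omega))
    have hz : ∀ g < 5, expCoeff 1 g (α 0) = 0 := fun g hg => expCoeff_eq_zero (by omega)
    rw [psi5_cast]
    simp [form5, minor4, minor2, expRows, hz]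
  · have h : 11 < α 1 := by
      by_contra h'
      exact h (Nat.ble_eq_true_of_le (by omega))
    have hz : ∀ g < 12, expCoeff 2 g (α 1) = 0 := fun g hg => expCoeff_eq_zero (by omega)
    rw [psi5_cast]
    simp [form5, minor4, minor2, expRows, hz]

/-- Whether the index `i = (a2 * 2 + a3) * 4 + a0` belongs to an exponent of degree `d` in the box
`(4, 6, 4, 2)`. -/
def good4 (d i : ℕ) : Bool :=
  force (Nat.add (Nat.add (Nat.mod i 4) (Nat.mod (Nat.div i 4) 2)) (Nat.div i 8)) fun s =>
  cond (Nat.ble s d) (Nat.ble d (Nat.add s 5)) false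

/-- The code of the exponent with index `i`, for `n = 4`. -/
def code4 (i : ℕ) : ℕ :=
  Nat.add (Nat.mul (Nat.add (Nat.mul (Nat.div i 8) 3) (Nat.mod (Nat.div i 4) 2)) 7) (Nat.mod i 4)

/-- Whether the index `i = ((a2 * 4 + a3) * 2 + a4) * 5 + a0` belongs to an exponent of degree `d`
in the box `(5, 8, 6, 4, 2)`. -/
def good5 (d i : ℕ) : Bool :=
  force (Nat.add (Nat.add (Nat.mod i 5) (Nat.mod (Nat.div i 5) 2))
    (Nat.add (Nat.mod (Nat.div i 10) 4) (Nat.div i 40))) fun s =>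
  cond (Nat.ble s d) (Nat.ble d (Nat.add s 7)) false

/-- The code of the exponent with index `i`, for `n = 5`. -/
def code5 (i : ℕ) : ℕ :=
  Nat.add (Nat.mul (Nat.add (Nat.mul (Nat.add (Nat.mul (Nat.div i 40) 7)
    (Nat.mod (Nat.div i 10) 4)) 3) (Nat.mod (Nat.div i 5) 2)) 9) (Nat.mod i 5)

lemma good4_iff (d i : ℕ) : good4 d i = true ↔
    i % 4 + i / 4 % 2 + i / 8 ≤ d ∧ d ≤ i % 4 + i / 4 % 2 + i / 8 + 5 := by
  change force (i % 4 + i / 4 % 2 + i / 8)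
    (fun s => cond (Nat.ble s d) (Nat.ble d (s + 5)) false) = true ↔ _
  rw [force_eq, Bool.cond_eq_ite]
  split_ifs with h
  · rw [Nat.ble_eq] at h ⊢; tauto
  · rw [Nat.ble_eq] at h; simp; tauto

lemma good5_iff (d i : ℕ) : good5 d i = true ↔
    i % 5 + i / 5 % 2 + (i / 10 % 4 + i / 40) ≤ d ∧
      d ≤ i % 5 + i / 5 % 2 + (i / 10 % 4 + i / 40) + 7 := by
  change force (i % 5 + i / 5 % 2 + (i / 10 % 4 + i / 40))
    (fun s => cond (Nat.ble s d) (Nat.ble d (s + 7)) false) = true ↔ _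
  rw [force_eq, Bool.cond_eq_ite]
  split_ifs with h
  · rw [Nat.ble_eq] at h ⊢; tauto
  · rw [Nat.ble_eq] at h; simp; tauto

/-- The exponent of degree `d` with index `i`, for `n = 4`. -/
def expo4 (d i : ℕ) : Fin 4 →₀ ℕ := Finsupp.equivFunOnFinite.symm
  ![i % 4, d - (i % 4 + i / 4 % 2 + i / 8), i / 8, i / 4 % 2]

/-- The exponent of degree `d` with index `i`, for `n = 5`. -/
def expo5 (d i : ℕ) : Fin 5 →₀ ℕ := Finsupp.equivFunOnFinite.symm
  ![i % 5, d - (i % 5 + i / 5 % 2 + (i / 10 % 4 + i / 40)), i / 40, i / 10 % 4, i / 5 % 2]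

/-- Relates the rows and columns of the Gram matrix, indexed by box exponents, to the indices
`i < 32` selected by `good4`. -/
lemma gram_four {d : ℕ}
    (h : nonsing (entry4 d) 7 21 (good4 d) code4 32 = true) (c : (Fin 4 →₀ ℕ) → ZMod 23)
    (hc : ∀ β ∈ expBox ![4, 6, 4, 2] d,
      ∑ m ∈ expBox ![4, 6, 4, 2] d, c m * (psi4 (β + m) : ZMod 23) = 0) :
    ∀ m ∈ expBox ![4, 6, 4, 2] d, c m = 0 := by
  have hmaps : ∀ i ∈ (range 32).filter (fun i => good4 d i = true),
      expo4 d i ∈ expBox ![4, 6, 4, 2] d := by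
    intro i hi
    rw [Finset.mem_filter, Finset.mem_range, good4_iff] at hi
    rw [mem_expBox]
    refine ⟨?_, fun k => ?_⟩
    · rw [Fin.sum_univ_four]
      simp [expo4]; omega
    · fin_cases k <;> simp [expo4] <;> omega
  have hinv : ∀ m ∈ expBox ![4, 6, 4, 2] d,
      (m 2 * 2 + m 3) * 4 + m 0 ∈ (range 32).filter (fun i => good4 d i = true) ∧
      expo4 d ((m 2 * 2 + m 3) * 4 + m 0) = m := by
    intro m hm
    rw [mem_expBox, Fin.sum_univ_four] at hm
    obtain ⟨h1, h2⟩ := hm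
    have b0 : m 0 < 4 := h2 0
    have b1 : m 1 < 6 := h2 1
    have b2 : m 2 < 4 := h2 2
    have b3 : m 3 < 2 := h2 3
    refine ⟨?_, ?_⟩
    · rw [Finset.mem_filter, Finset.mem_range, good4_iff]; omega
    · ext k
      fin_cases k <;> simp [expo4] <;> omega
  have hinj : ∀ i ∈ (range 32).filter (fun i => good4 d i = true),
      ((expo4 d i) 2 * 2 + (expo4 d i) 3) * 4 + (expo4 d i) 0 = i := by
    intro i hi
    simp [expo4]; omega
  have key := nonsing_sound (entry4_lt d) (by norm_num) ?_ h (fun i => c (expo4 d i)) ?_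
  · intro m hm
    rw [← (hinv m hm).2]
    exact key _ (hinv m hm).1
  · intro i hi j hj
    change (i / 8 * 3 + i / 4 % 2) * 7 + i % 4 + ((j / 8 * 3 + j / 4 % 2) * 7 + j % 4) < 7 * 21
    omega
  · intro i hi
    rw [← hc _ (hmaps i hi)]
    refine Finset.sum_nbij' (expo4 d) (fun m => (m 2 * 2 + m 3) * 4 + m 0) hmaps
      (fun m hm => (hinv m hm).1) hinj (fun m hm => (hinv m hm).2) fun j hj => ?_
    have hi' := (mem_expBox.1 (hmaps i hi)).1
    have hj' := (mem_expBox.1 (hmaps j hj)).1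
    rw [Finset.mem_filter, Finset.mem_range] at hi hj
    rw [← entry4_cast (d := d) (expo4 d i + expo4 d j)]
    · have : code4 i + code4 j = ((expo4 d i + expo4 d j) 2 * 3 + (expo4 d i + expo4 d j) 3) * 7
          + (expo4 d i + expo4 d j) 0 := by
        change (i / 8 * 3 + i / 4 % 2) * 7 + i % 4 + ((j / 8 * 3 + j / 4 % 2) * 7 + j % 4) = _
        simp [expo4]; ring
      rw [this]
    · simp only [Finsupp.add_apply, Finset.sum_add_distrib, hi', hj']; ring
    all_goals simp [expo4]; omega

/-- Relates the rows and columns of the Gram matrix, indexed by box exponents, to the indices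
`i < 240` selected by `good5`. -/
lemma gram_five {d : ℕ}
    (h : nonsing (entry5 d) 63 33 (good5 d) code5 240 = true) (c : (Fin 5 →₀ ℕ) → ZMod 23)
    (hc : ∀ β ∈ expBox ![5, 8, 6, 4, 2] d,
      ∑ m ∈ expBox ![5, 8, 6, 4, 2] d, c m * (psi5 (β + m) : ZMod 23) = 0) :
    ∀ m ∈ expBox ![5, 8, 6, 4, 2] d, c m = 0 := by
  have hmaps : ∀ i ∈ (range 240).filter (fun i => good5 d i = true),
      expo5 d i ∈ expBox ![5, 8, 6, 4, 2] d := by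
    intro i hi
    rw [Finset.mem_filter, Finset.mem_range, good5_iff] at hi
    rw [mem_expBox]
    refine ⟨?_, fun k => ?_⟩
    · rw [Fin.sum_univ_five]
      simp [expo5]; omega
    · fin_cases k <;> simp [expo5] <;> omega
  have hinv : ∀ m ∈ expBox ![5, 8, 6, 4, 2] d,
      ((m 2 * 4 + m 3) * 2 + m 4) * 5 + m 0 ∈ (range 240).filter (fun i => good5 d i = true) ∧
      expo5 d (((m 2 * 4 + m 3) * 2 + m 4) * 5 + m 0) = m := by
    intro m hm
    rw [mem_expBox, Fin.sum_univ_five] at hm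
    obtain ⟨h1, h2⟩ := hm
    have b0 : m 0 < 5 := h2 0
    have b1 : m 1 < 8 := h2 1
    have b2 : m 2 < 6 := h2 2
    have b3 : m 3 < 4 := h2 3
    have b4 : m 4 < 2 := h2 4
    have q0 : (((m 2 * 4 + m 3) * 2 + m 4) * 5 + m 0) % 5 = m 0 := by omega
    have r5 : (((m 2 * 4 + m 3) * 2 + m 4) * 5 + m 0) / 5 = (m 2 * 4 + m 3) * 2 + m 4 := by omega
    have r10 : (((m 2 * 4 + m 3) * 2 + m 4) * 5 + m 0) / 10 = m 2 * 4 + m 3 := by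
      rw [show 10 = 5 * 2 from rfl, ← Nat.div_div_eq_div_mul, r5]; omega
    have r40 : (((m 2 * 4 + m 3) * 2 + m 4) * 5 + m 0) / 40 = m 2 := by
      rw [show 40 = 10 * 4 from rfl, ← Nat.div_div_eq_div_mul, r10]; omega
    have q4 : ((m 2 * 4 + m 3) * 2 + m 4) % 2 = m 4 := by omega
    have q3 : (m 2 * 4 + m 3) % 4 = m 3 := by omega
    refine ⟨?_, ?_⟩
    · rw [Finset.mem_filter, Finset.mem_range, good5_iff, r5, r10, r40, q0, q3, q4]; omega
    · rw [expo5, r5, r10, r40, q0, q3, q4]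
      ext k
      fin_cases k <;> simp
      omega
  have hinj : ∀ i ∈ (range 240).filter (fun i => good5 d i = true),
      (((expo5 d i) 2 * 4 + (expo5 d i) 3) * 2 + (expo5 d i) 4) * 5 + (expo5 d i) 0 = i := by
    intro i hi
    simp [expo5]; omega
  have key := nonsing_sound (entry5_lt d) (by norm_num) ?_ h (fun i => c (expo5 d i)) ?_
  · intro m hm
    rw [← (hinv m hm).2]
    exact key _ (hinv m hm).1
  · intro i hi j hj
    change ((i / 40 * 7 + i / 10 % 4) * 3 + i / 5 % 2) * 9 + i % 5
      + (((j / 40 * 7 + j / 10 % 4) * 3 + j / 5 % 2) * 9 + j % 5) < 63 * 33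
    omega
  · intro i hi
    rw [← hc _ (hmaps i hi)]
    refine Finset.sum_nbij' (expo5 d) (fun m => ((m 2 * 4 + m 3) * 2 + m 4) * 5 + m 0) hmaps
      (fun m hm => (hinv m hm).1) hinj (fun m hm => (hinv m hm).2) fun j hj => ?_
    have hi' := (mem_expBox.1 (hmaps i hi)).1
    have hj' := (mem_expBox.1 (hmaps j hj)).1
    rw [Finset.mem_filter, Finset.mem_range] at hi hj
    rw [← entry5_cast (d := d) (expo5 d i + expo5 d j)]
    · have : code5 i + code5 j = (((expo5 d i + expo5 d j) 2 * 7 + (expo5 d i + expo5 d j) 3) * 3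
          + (expo5 d i + expo5 d j) 4) * 9 + (expo5 d i + expo5 d j) 0 := by
        change ((i / 40 * 7 + i / 10 % 4) * 3 + i / 5 % 2) * 9 + i % 5
          + (((j / 40 * 7 + j / 10 % 4) * 3 + j / 5 % 2) * 9 + j % 5) = _
        simp [expo5]; ring
      rw [this]
    · simp only [Finsupp.add_apply, Finset.sum_add_distrib, hi', hj']; ring
    all_goals simp [expo5]; omega

lemma nonsing_four {d : ℕ} (hd : 2 * d ≤ 12) :
    nonsing (entry4 d) 7 21 (good4 d) code4 32 = true := by
  have hd : d ≤ 6 := by omega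
  interval_cases d <;> decide +kernel

lemma nonsing_five {d : ℕ} (hd : 2 * d ≤ 20) :
    nonsing (entry5 d) 63 33 (good5 d) code5 240 = true := by
  have hd : d ≤ 10 := by omega
  interval_cases d <;> decide +kernel

/-- For `n ∈ {4,5}`, `ω = x_1 + 2x_2 + ⋯ + nx_n` is a Hard Lefschetz element of
`ℝ[x_1,…,x_n]/(f_1,…,f_n)` with socle degree `n² − n` (the cohomology of `Spin(2n)//S_2`). -/
theorem hard_lefschetz_Spin_even_S2 (n : ℕ) (hn : n = 4 ∨ n = 5) :
    IsHardLefschetzElement (Ideal.span (Set.range (rel3 n)))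
      (Ideal.Quotient.mk (Ideal.span (Set.range (rel3 n))) (omegaPoly n)) (n ^ 2 - n) := by
  have : Fact (Nat.Prime 23) := ⟨by norm_num⟩
  rcases hn with rfl | rfl
  · exact isHardLefschetz_of_functional _ ![4, 6, 4, 2] (fun i => (i.val : ℝ) + 1) 12 psi4 23
      (by decide) reduction_four functional_psi4_rel psi4_euler
      (fun d hd c hc => gram_four (nonsing_four hd) c hc)
  · exact isHardLefschetz_of_functional _ ![5, 8, 6, 4, 2] (fun i => (i.val : ℝ) + 1) 20 psi5 23
      (by decide) reduction_five functional_psi5_rel psi5_euler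
      (fun d hd c hc => gram_five (nonsing_five hd) c hc)
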